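/- Let D = (P,𝓑) be a non-trivial symmetric 2-(v,k,λ) design and let G be a flag-transitive automorphism group of D whose point stabilizers G_x have order 2p for some prime p. Then (v,k,λ) = (16,6,2), p = 3, G acts imprimitively on the point set P and imprimitively on the block set 𝓑, and for every point x and block B the stabilizers satisfy G_x ≅ G_B, with G_x isomorphic either to the dihedral group D_6 (≅ S_3) or to the cyclic group Z_6. -/

import Mathlib

/-!
# Flag-transitive symmetric designs with point stabilizers of order `2p`

The design is treated abstractly, as an incidence relation between a point type `X` and a block type
`Y` with the dual axioms built in (`SymDesign`), so that every counting statement is available for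
points and for blocks. For `G` flag-transitive with point stabilizers of order `2p` (`FlagDesign`),
`k` divides `2p`, hence `k = p` or `k = 2p`. One finds that `p` is odd and prime to `λ`, so an
element of order `p` fixing a point also determines a unique fixed block; consequently every point
stabilizer is a block stabilizer and vice versa (`beta_pt`, `beta_blk`).

A group of order `2p` is cyclic or dihedral. If the stabilizers are cyclic, counting the fixed points
of their unique involution gives `(16,6,2)`. If they are dihedral, call an involution special if it
fixes a point, and let `F` be its number of fixed points. Each stabilizer contains `p` special
involutions, and double counting of pairs of commuting special involutions, together with the number
of blocks fixed by an involution and passing through a given point, leaves only `(16,6,2)` or a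
family with `k = 2p`, `λ = 6`, `v = 1 + pm` and `3m = 2p - 1`.

In that family more than three quarters of the elements of the centralizer of a special involution
`t` are involutions or trivial, so the centralizer is an elementary abelian `2`-group
(`sq_eq_one_of_many`). Commuting is then an equivalence relation on the special involutions with `p`
classes, and the centralizer of `t` acts on the classes other than that of `t` with orbits of length
divisible by `8`, so `8 ∣ p - 1`. As `F` is a power of `2` this contradicts the arithmetic
(`triple_arith`).

Finally `|G| = 96` and `G` has degree `16` on points and on blocks. If it were primitive, it would
have an elementary abelian regular normal subgroup of order `16`. An involution of a point stabilizer
centralizes some `z ≠ 1` in it, so `z` has at most three conjugates, and these generate a non-trivial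
normal subgroup of order at most `8`, which cannot be transitive (`not_primitive`). This argument
applies to points and to blocks.
-/

open scoped Pointwise

/-- A group action is primitive if it is transitive and every block is trivial
(this is the usual notion of a primitive permutation group). -/
def IsPrimitiveAction (G X : Type*) [Group G] [MulAction G X] : Prop :=
  MulAction.IsPretransitive G X ∧
    ∀ B : Set X, MulAction.IsBlock G B → B.Subsingleton ∨ B = Set.univ

variable {P : Type*} [Fintype P] [DecidableEq P]

/-- `𝓑` is the block set of a (non-trivial) 2-design with parameters `(v, k, lam)`
on the point set `P`. -/
structure IsDesign (𝓑 : Finset (Finset P)) (v k lam : ℕ) : Prop where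
  card_points : Fintype.card P = v
  blocks_card : ∀ B ∈ 𝓑, B.card = k
  two_lt_k : 2 < k
  k_lt_v : k < v - 1
  lam_pos : 0 < lam
  pair_blocks : ∀ x y : P, x ≠ y → (𝓑.filter fun B => x ∈ B ∧ y ∈ B).card = lam

/-- `G` is an automorphism group of the design with block set `𝓑`:
every element of `G` maps blocks to blocks. -/
def IsAutGroup (G : Subgroup (Equiv.Perm P)) (𝓑 : Finset (Finset P)) : Prop :=
  ∀ g ∈ G, ∀ B ∈ 𝓑, g • B ∈ 𝓑

/-- `G` acts transitively on the flags of the design with block set `𝓑`. -/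
def IsFlagTransitive (G : Subgroup (Equiv.Perm P)) (𝓑 : Finset (Finset P)) : Prop :=
  ∀ B₁ ∈ 𝓑, ∀ B₂ ∈ 𝓑, ∀ x₁ ∈ B₁, ∀ x₂ ∈ B₂, ∃ g ∈ G, g • x₁ = x₂ ∧ g • B₁ = B₂

/-- `G` acts transitively on the blocks of the design with block set `𝓑`. -/
def IsBlockTransitive (G : Subgroup (Equiv.Perm P)) (𝓑 : Finset (Finset P)) : Prop :=
  ∀ B₁ ∈ 𝓑, ∀ B₂ ∈ 𝓑, ∃ g ∈ G, g • B₁ = B₂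

/-! ### Counting in symmetric designs -/

section Design
set_option linter.unusedSectionVars false
open Classical Finset

variable {X Y : Type*} [Fintype X] [Fintype Y]

/-- A non-trivial symmetric `2-(v,k,l)` design, given by a point type `X`, a block type `Y` and an
incidence relation `I`. The dual axioms `rep` and `meet` are part of the structure, so that points
and blocks play symmetric roles. -/
structure SymDesign (I : X → Y → Prop) (v k l : ℕ) : Prop where
  cardX : Fintype.card X = v
  cardY : Fintype.card Y = v
  blk : ∀ B, (univ.filter fun x => I x B).card = k
  rep : ∀ x, (univ.filter fun B => I x B).card = k
  pair : ∀ x y, x ≠ y → (univ.filter fun B => I x B ∧ I y B).card = l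
  meet : ∀ B C, B ≠ C → (univ.filter fun x => I x B ∧ I x C).card = l
  two_lt : 2 < k
  k_lt : k + 1 < v
  l_pos : 0 < l

/-- The `0/1` entry of the incidence matrix. -/
noncomputable def ind (I : X → Y → Prop) (x : X) (B : Y) : ℤ := if I x B then 1 else 0

lemma sum_ind_blk (I : X → Y → Prop) (B : Y) :
    ∑ x, ind I x B = ((univ.filter fun x => I x B).card : ℤ) := by
  simp [ind]

lemma sum_ind_rep (I : X → Y → Prop) (x : X) :
    ∑ B, ind I x B = ((univ.filter fun B => I x B).card : ℤ) := by
  simp [ind]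

lemma ind_mul (I : X → Y → Prop) (x y : X) (B : Y) :
    ind I x B * ind I y B = if I x B ∧ I y B then 1 else 0 := by
  unfold ind; split_ifs <;> simp_all

lemma ind_mul' (I : X → Y → Prop) (x : X) (B C : Y) :
    ind I x B * ind I x C = if I x B ∧ I x C then 1 else 0 := by
  unfold ind; split_ifs <;> simp_all

lemma sum_ind_pair (I : X → Y → Prop) (x y : X) :
    ∑ B, ind I x B * ind I y B = ((univ.filter fun B => I x B ∧ I y B).card : ℤ) := by
  simp [ind_mul]

lemma sum_ind_meet (I : X → Y → Prop) (B C : Y) :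
    ∑ x, ind I x B * ind I x C = ((univ.filter fun x => I x B ∧ I x C).card : ℤ) := by
  simp [ind_mul']

/-- Constant replication number `k` and constant block intersections `l` in a `2`-design with as
many blocks as points. The second fact holds because `∑ (|B ∩ C| - l)²` over the blocks `C ≠ B`
vanishes. -/
lemma SymDesign.of_pair {I : X → Y → Prop} {v k l : ℕ} (cardX : Fintype.card X = v)
    (cardY : Fintype.card Y = v) (blk : ∀ B, (univ.filter fun x => I x B).card = k)
    (pair : ∀ x y, x ≠ y → (univ.filter fun B => I x B ∧ I y B).card = l)
    (two_lt : 2 < k) (k_lt : k + 1 < v) (l_pos : 0 < l) : SymDesign I v k l := by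
  have hblk : ∀ B, ∑ x, ind I x B = k := fun B => by rw [sum_ind_blk, blk]
  have key : ∀ x, (k : ℤ) * (univ.filter fun B => I x B).card
      = (univ.filter fun B => I x B).card + l * (v - 1) := by
    intro x
    have h1 : ∑ y, ∑ B, ind I x B * ind I y B = (k : ℤ) * (univ.filter fun B => I x B).card := by
      rw [sum_comm]
      simp_rw [← mul_sum, hblk, ← sum_mul, sum_ind_rep]
      ring
    rw [← h1, ← add_sum_erase univ _ (mem_univ x)]
    congr 1
    · simp [ind_mul]
    · rw [sum_congr rfl (g := fun _ => (l : ℤ))]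
      · rw [sum_const, card_erase_of_mem (mem_univ x), card_univ, cardX, nsmul_eq_mul]
        push_cast [Nat.cast_sub (show 1 ≤ v by omega)]
        ring
      · intro y hy
        rw [sum_ind_pair, pair x y (ne_of_mem_erase hy).symm]
  have hk : (2 : ℤ) < k := by exact_mod_cast two_lt
  have hv : (0 : ℤ) < v := by exact_mod_cast (by omega : 0 < v)
  have hX : Nonempty X := Fintype.card_pos_iff.mp (by omega)
  have const : ∀ x y, (univ.filter fun B => I x B).card = (univ.filter fun B => I y B).card := by
    intro x y
    have h := (key x)
    have h' := key y
    have : ((k : ℤ) - 1) * (univ.filter fun B => I x B).card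
      = (k - 1) * (univ.filter fun B => I y B).card := by linarith
    exact_mod_cast mul_left_cancel₀ (by linarith : (k : ℤ) - 1 ≠ 0) this
  have rep : ∀ x, (univ.filter fun B => I x B).card = k := by
    intro x
    have h1 : ∑ y, ∑ B, ind I y B = (v : ℤ) * k := by
      rw [sum_comm]; simp [hblk, cardY]
    have h2 : ∑ y, ∑ B, ind I y B = (v : ℤ) * (univ.filter fun B => I x B).card := by
      simp_rw [sum_ind_rep, fun y => const y x]; simp [cardX]
    exact_mod_cast mul_left_cancel₀ hv.ne' (h2.symm.trans h1)
  have hrep : ∀ x, ∑ B, ind I x B = k := fun x => by rw [sum_ind_rep, rep]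
  have hpair : ∀ x y, ∑ B, ind I x B * ind I y B = (l : ℤ) + if x = y then (k : ℤ) - l else 0 := by
    intro x y
    rw [sum_ind_pair]
    split_ifs with h
    · subst h; simp [rep]
    · rw [pair x y h]; simp
  have kk : (k : ℤ) * k = k + l * (v - 1) := by
    obtain ⟨x⟩ := hX
    have := key x
    rwa [rep] at this
  refine ⟨cardX, cardY, blk, rep, pair, ?_, two_lt, k_lt, l_pos⟩
  intro B C hBC
  set f : Y → ℤ := fun C => ∑ x, ind I x B * ind I x C with hf
  have f1 : ∑ C, f C = (k : ℤ) * k := by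
    simp only [hf]
    rw [sum_comm]
    simp_rw [← mul_sum, hrep, ← sum_mul, hblk]
  have f2 : ∑ C, f C * f C = (l : ℤ) * k * k + (k - l) * k := by
    have : ∀ C, f C * f C
        = ∑ x, ∑ y, ind I x B * ind I y B * (ind I x C * ind I y C) := by
      intro C
      simp only [hf]
      rw [sum_mul_sum]
      exact sum_congr rfl fun x _ => sum_congr rfl fun y _ => by ring
    simp_rw [this]
    rw [sum_comm]
    have h2 : ∀ x, ∑ C, ∑ y, ind I x B * ind I y B * (ind I x C * ind I y C)
        = l * k * ind I x B + (k - l) * ind I x B := by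
      intro x
      rw [sum_comm]
      simp_rw [← mul_sum, hpair, mul_add, sum_add_distrib, ← sum_mul, ← mul_sum, hblk]
      simp only [mul_ite, mul_zero, sum_ite_eq, mem_univ, if_true]
      have : ind I x B * ind I x B = ind I x B := by unfold ind; split_ifs <;> simp
      rw [this]; ring
    simp_rw [h2, sum_add_distrib, ← mul_sum, hblk]
  have fB : f B = k := by simp only [hf]; rw [sum_ind_meet]; simp [blk]
  have f3 : ∑ C, (f C - l) ^ 2 = ((k : ℤ) - l) ^ 2 := by
    have : ∀ C, (f C - l) ^ 2 = f C * f C - 2 * l * f C + l ^ 2 := fun C => by ring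
    simp_rw [this, sum_add_distrib, sum_sub_distrib, ← mul_sum, f1, f2]
    simp only [sum_const, card_univ, cardY, nsmul_eq_mul]
    linear_combination (-l : ℤ) * kk
  rw [← add_sum_erase univ _ (mem_univ B), fB] at f3
  have f4 : ∑ C ∈ univ.erase B, (f C - l) ^ 2 = 0 := by linarith
  rw [sum_eq_zero_iff_of_nonneg (fun _ _ => sq_nonneg _)] at f4
  have := f4 C (mem_erase.mpr ⟨hBC.symm, mem_univ _⟩)
  have h5 : f C = l := by nlinarith
  simp only [hf] at h5
  rw [sum_ind_meet] at h5
  exact_mod_cast h5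

variable {I : X → Y → Prop} {v k l : ℕ}

lemma SymDesign.hpair (D : SymDesign I v k l) (x y : X) :
    ∑ B, ind I x B * ind I y B = (l : ℤ) + if x = y then (k : ℤ) - l else 0 := by
  rw [sum_ind_pair]
  split_ifs with h
  · subst h; simp [D.rep]
  · rw [D.pair x y h]; simp

lemma SymDesign.hmeet (D : SymDesign I v k l) (B C : Y) :
    ∑ x, ind I x B * ind I x C = (l : ℤ) + if B = C then (k : ℤ) - l else 0 := by
  rw [sum_ind_meet]
  split_ifs with h
  · subst h; simp [D.blk]
  · rw [D.meet B C h]; simp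

lemma SymDesign.kk (D : SymDesign I v k l) : k * k + l = k + l * v := by
  have hX : Nonempty X := Fintype.card_pos_iff.mp (by have := D.cardX; have := D.k_lt; omega)
  obtain ⟨x⟩ := hX
  have h1 : ∑ y, ∑ B, ind I x B * ind I y B = (k : ℤ) * k := by
    rw [sum_comm]
    simp_rw [← mul_sum, sum_ind_blk, D.blk, ← sum_mul, sum_ind_rep, D.rep]
  simp_rw [D.hpair, sum_add_distrib] at h1
  simp [D.cardX] at h1
  zify
  linarith

lemma SymDesign.l_lt (D : SymDesign I v k l) : l + 2 ≤ k := by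
  have h := D.kk
  have h1 := D.k_lt
  have h2 := D.two_lt
  by_contra hc
  have : k ≤ l + 1 := by omega
  obtain ⟨w, rfl⟩ : ∃ w, v = w + k + 2 := ⟨v - k - 2, by omega⟩
  nlinarith

end Design

/-! ### Flag-transitive groups and fixed elements -/

section Flag
open Classical Finset MulAction
set_option linter.unusedSectionVars false

variable {G X Y : Type*} [Group G] [Fintype G] [Fintype X] [Fintype Y] [MulAction G X]
  [MulAction G Y]

/-- A group `G` acting faithfully and flag-transitively on a symmetric design, with point
stabilizers of order `2p` for a prime `p`. -/
structure FlagDesign (G : Type*) [Group G] [Fintype G] [MulAction G X] [MulAction G Y]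
    (I : X → Y → Prop) (v k l p : ℕ) : Prop extends SymDesign I v k l where
  prime : p.Prime
  inv : ∀ (g : G) x B, I (g • x) (g • B) ↔ I x B
  flag : ∀ x B y C, I x B → I y C → ∃ g : G, g • x = y ∧ g • B = C
  stab : ∀ x : X, Nat.card (stabilizer G x) = 2 * p
  faithful : ∀ g : G, (∀ x : X, g • x = x) → g = 1

/-- The set of points (or blocks) fixed by `g`. -/
noncomputable def fixSet (Z : Type*) [Fintype Z] [MulAction G Z] (g : G) : Finset Z :=
  univ.filter fun z => g • z = z

@[simp] lemma mem_fixSet {Z : Type*} [Fintype Z] [MulAction G Z] {g : G} {z : Z} :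
    z ∈ fixSet Z g ↔ g • z = z := by simp [fixSet]

lemma card_fix_modEq {Z : Type*} [Fintype Z] [MulAction G Z] {q : ℕ} (hq : q.Prime) {g : G}
    (hg : g ^ q = 1) (s : Finset Z) (hs : ∀ z ∈ s, g • z ∈ s) :
    s.card ≡ (s.filter fun z => g • z = z).card [MOD q] := by
  have : Fact q.Prime := ⟨hq⟩
  let f : Function.End s := fun z => ⟨g • (z : Z), hs z z.2⟩
  have hf : ∀ n : ℕ, ∀ z : s, (((f ^ n) z : s) : Z) = g ^ n • (z : Z) := by
    intro n
    induction n with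
    | zero => intro z; rw [pow_zero, pow_zero, one_smul]; rfl
    | succ n ih =>
      intro z
      rw [pow_succ' f, pow_succ' g, mul_smul, ← ih]
      rfl
  have h1 : f ^ q ^ 1 = 1 := by
    funext z
    apply Subtype.ext
    rw [hf, pow_one, hg, one_smul]
    rfl
  have h2 := Equiv.Perm.card_fixedPoints_modEq h1
  rw [Fintype.card_coe] at h2
  refine h2.trans ?_
  have : Fintype.card (Function.fixedPoints f) = (s.filter fun z => g • z = z).card := by
    rw [← Fintype.card_coe]
    refine Fintype.card_congr ⟨fun z => ⟨z.1.1, ?_⟩, fun z => ⟨⟨z.1, ?_⟩, ?_⟩, ?_, ?_⟩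
    · have := z.2
      simp only [mem_filter]
      refine ⟨z.1.2, ?_⟩
      exact congrArg Subtype.val this
    · exact (mem_filter.mp z.2).1
    · exact Subtype.ext (mem_filter.mp z.2).2
    · intro z; rfl
    · intro z; rfl
  rw [this]

variable {I : X → Y → Prop} {v k l p : ℕ}

namespace FlagDesign

/-- An automorphism fixes as many blocks as points: both numbers are read off from
the number of incident pairs `(x, B)` with `g x` also on `B`. -/
lemma card_fix_eq (D : FlagDesign G I v k l p) (g : G) :
    (fixSet Y g).card = (fixSet X g).card := by
  have e1 : ∑ x, ∑ B, ind I x B * ind I (g • x) B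
      = (l : ℤ) * v + (k - l) * (fixSet X g).card := by
    simp_rw [D.hpair, sum_add_distrib]
    simp only [sum_const, card_univ, D.cardX, nsmul_eq_mul, fixSet, sum_ite, sum_const_zero,
      add_zero]
    simp_rw [eq_comm (b := g • (_ : X))]
    ring
  have e2 : ∑ x, ∑ B, ind I x B * ind I (g • x) B
      = (l : ℤ) * v + (k - l) * (fixSet Y g).card := by
    rw [sum_comm]
    have : ∀ B x, ind I (g • x) B = ind I x (g⁻¹ • B) := by
      intro B x
      unfold ind
      have := D.inv g x (g⁻¹ • B)
      rw [smul_inv_smul] at this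
      simp only [this]
    simp_rw [this, D.hmeet, sum_add_distrib]
    simp only [sum_const, card_univ, D.cardY, nsmul_eq_mul, fixSet, sum_ite, sum_const_zero,
      add_zero]
    simp_rw [eq_inv_smul_iff]
    ring
  have hl := D.l_lt
  have : ((k : ℤ) - l) * (fixSet Y g).card = (k - l) * (fixSet X g).card := by linarith
  have h0 : (k : ℤ) - l ≠ 0 := by
    have : (l : ℤ) + 2 ≤ k := by exact_mod_cast hl
    linarith
  exact_mod_cast mul_left_cancel₀ h0 this

lemma exists_block (D : FlagDesign G I v k l p) (x : X) : ∃ B, I x B := by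
  have h := D.rep x
  have h2 := D.two_lt
  obtain ⟨B, hB⟩ := card_pos.mp (by rw [h]; omega : 0 < (univ.filter fun B => I x B).card)
  exact ⟨B, (mem_filter.mp hB).2⟩

lemma exists_point (D : FlagDesign G I v k l p) (B : Y) : ∃ x, I x B := by
  have h := D.blk B
  have h2 := D.two_lt
  obtain ⟨x, hx⟩ := card_pos.mp (by rw [h]; omega : 0 < (univ.filter fun x => I x B).card)
  exact ⟨x, (mem_filter.mp hx).2⟩

lemma trans (D : FlagDesign G I v k l p) (x y : X) : ∃ g : G, g • x = y := by
  obtain ⟨B, hB⟩ := D.exists_block x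
  obtain ⟨C, hC⟩ := D.exists_block y
  obtain ⟨g, h, -⟩ := D.flag x B y C hB hC
  exact ⟨g, h⟩

lemma transB (D : FlagDesign G I v k l p) (B C : Y) : ∃ g : G, g • B = C := by
  obtain ⟨x, hx⟩ := D.exists_point B
  obtain ⟨y, hy⟩ := D.exists_point C
  obtain ⟨g, -, h⟩ := D.flag x B y C hx hy
  exact ⟨g, h⟩

lemma nonempty (D : FlagDesign G I v k l p) : Nonempty X :=
  Fintype.card_pos_iff.mp (by have := D.cardX; have := D.k_lt; omega)

lemma card_G (D : FlagDesign G I v k l p) : Nat.card G = v * (2 * p) := by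
  obtain ⟨x⟩ := D.nonempty
  rw [← card_orbit_mul_card_stabilizer_eq_card_group G x |>.trans Nat.card_eq_fintype_card.symm,
    ← Nat.card_eq_fintype_card, ← Nat.card_eq_fintype_card, D.stab]
  congr 1
  have : orbit G x = Set.univ := Set.eq_univ_of_forall fun y => D.trans x y
  rw [this]; simp [D.cardX]

lemma stabB (D : FlagDesign G I v k l p) (B : Y) : Nat.card (stabilizer G B) = 2 * p := by
  have h := card_orbit_mul_card_stabilizer_eq_card_group G B
  rw [← Nat.card_eq_fintype_card, ← Nat.card_eq_fintype_card, ← Nat.card_eq_fintype_card,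
    D.card_G] at h
  have : orbit G B = Set.univ := Set.eq_univ_of_forall fun y => D.transB B y
  have ho : Nat.card (orbit G B) = v := by
    rw [this]; simp [D.cardY]
  rw [ho] at h
  have hv : 0 < v := by have := D.k_lt; omega
  exact Nat.eq_of_mul_eq_mul_left hv h

lemma card_flagStab (D : FlagDesign G I v k l p) {x : X} {B : Y} (h : I x B) :
    k * Nat.card (stabilizer (stabilizer G x) B) = 2 * p := by
  rw [← D.stab x, ← D.rep x]
  have h1 := card_orbit_mul_card_stabilizer_eq_card_group (stabilizer G x) B
  rw [← Nat.card_eq_fintype_card, ← Nat.card_eq_fintype_card, ← Nat.card_eq_fintype_card] at h1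
  rw [← h1]
  congr 1
  have : orbit (stabilizer G x) B = ((univ.filter fun B => I x B : Finset Y) : Set Y) := by
    ext C
    simp only [mem_orbit_iff, coe_filter, mem_univ, true_and, Set.mem_ofPred_eq]
    constructor
    · rintro ⟨g, rfl⟩
      have := D.inv (g : G) x B
      rw [mem_stabilizer_iff.mp g.2] at this
      exact this.mpr h
    · intro hC
      obtain ⟨g, hg, hgB⟩ := D.flag x B x C h hC
      exact ⟨⟨g, hg⟩, hgB⟩
  rw [this]; simp

lemma k_dvd (D : FlagDesign G I v k l p) : k ∣ 2 * p := by
  obtain ⟨x⟩ := D.nonempty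
  obtain ⟨B, hB⟩ := D.exists_block x
  exact ⟨_, (D.card_flagStab hB).symm⟩

lemma k_cases (D : FlagDesign G I v k l p) : k = p ∨ k = 2 * p := by
  obtain ⟨m, hm⟩ := D.k_dvd
  have h2 := D.two_lt
  have hp := D.prime
  have hp0 := hp.pos
  have : p ∣ k * m := ⟨2, by omega⟩
  rcases (Nat.Prime.dvd_mul hp).mp this with ⟨a, rfl⟩ | ⟨a, rfl⟩
  · have : 2 = a * m := Nat.eq_of_mul_eq_mul_left hp0 (by linarith)
    have ha : a ∣ 2 := ⟨m, this⟩
    rcases (Nat.dvd_prime Nat.prime_two).mp ha with rfl | rfl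
    · left; ring
    · right; ring
  · have : 2 = k * a := Nat.eq_of_mul_eq_mul_left hp0 (by linarith)
    have ha : k ∣ 2 := ⟨a, this⟩
    have := Nat.le_of_dvd two_pos ha
    omega

lemma flag_one (D : FlagDesign G I v k l p) (hk : k = 2 * p) {x : X} {B : Y} (h : I x B) {g : G}
    (hx : g • x = x) (hB : g • B = B) : g = 1 := by
  have h1 := D.card_flagStab h
  have hp := D.prime.pos
  have h2 : Nat.card (stabilizer (stabilizer G x) B) = 1 :=
    Nat.eq_of_mul_eq_mul_left (by omega : 0 < k) (by omega)
  have := (Nat.card_eq_one_iff_unique.mp h2).1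
  have h3 : (⟨⟨g, hx⟩, hB⟩ : stabilizer (stabilizer G x) B) = 1 := Subsingleton.elim _ _
  exact congrArg (fun z : stabilizer (stabilizer G x) B => ((z : stabilizer G x) : G)) h3

lemma flag_sq (D : FlagDesign G I v k l p) {x : X} {B : Y} (h : I x B) {g : G}
    (hx : g • x = x) (hB : g • B = B) : g ^ 2 = 1 := by
  rcases D.k_cases with hk | hk
  · have h1 := D.card_flagStab h
    have hp := D.prime.pos
    have h2 : Nat.card (stabilizer (stabilizer G x) B) = 2 :=
      Nat.eq_of_mul_eq_mul_left (by omega : 0 < k) (by rw [h1, hk]; ring)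
    have h3 : (⟨⟨g, hx⟩, hB⟩ : stabilizer (stabilizer G x) B) ^ 2 = 1 := by
      rw [← h2]; exact pow_card_eq_one'
    exact congrArg (fun z : stabilizer (stabilizer G x) B => ((z : stabilizer G x) : G)) h3
  · rw [D.flag_one hk h hx hB, one_pow]

lemma flag_two (D : FlagDesign G I v k l p) (hk : k = p) {x : X} {B : Y} (h : I x B) {g g' : G}
    (hx : g • x = x) (hB : g • B = B) (hx' : g' • x = x) (hB' : g' • B = B) (h1 : g ≠ 1)
    (h1' : g' ≠ 1) : g = g' := by
  have h3 := D.card_flagStab h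
  have hp := D.prime.pos
  have h2 : Nat.card (stabilizer (stabilizer G x) B) = 2 :=
    Nat.eq_of_mul_eq_mul_left (by omega : 0 < k) (by rw [h3, hk]; ring)
  obtain ⟨z, hz⟩ := (Nat.card_eq_two_iff' (1 : stabilizer (stabilizer G x) B)).mp h2
  have e1 := hz.2 ⟨⟨g, hx⟩, hB⟩ (fun he => h1 (congrArg
    (fun z : stabilizer (stabilizer G x) B => ((z : stabilizer G x) : G)) he))
  have e2 := hz.2 ⟨⟨g', hx'⟩, hB'⟩ (fun he => h1' (congrArg
    (fun z : stabilizer (stabilizer G x) B => ((z : stabilizer G x) : G)) he))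
  exact congrArg (fun z : stabilizer (stabilizer G x) B => ((z : stabilizer G x) : G))
    (e1.trans e2.symm)

end FlagDesign
end Flag

/-! ### Groups of order `2p` -/

section Order2p
open Subgroup

/-- `t` is an involution. -/
def IsInv {A : Type*} [Group A] (t : A) : Prop := t ≠ 1 ∧ t * t = 1

variable {A : Type*} [Group A] {p : ℕ}

lemma IsInv.inv_eq {t : A} (h : IsInv t) : t⁻¹ = t := inv_eq_of_mul_eq_one_left h.2

lemma IsInv.conj {t : A} (h : IsInv t) (g : A) : IsInv (g * t * g⁻¹) := by
  refine ⟨fun h1 => h.1 ?_, ?_⟩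
  · have : g⁻¹ * (g * t * g⁻¹) * g = g⁻¹ * 1 * g := by rw [h1]
    simpa [mul_assoc] using this
  · have : g * t * g⁻¹ * (g * t * g⁻¹) = g * (t * t) * g⁻¹ := by group
    rw [this, h.2]; group

lemma eq_one_of_sq_of_pow_odd {d : A} (hp : Odd p) (h2 : d * d = 1) (h1 : d ^ p = 1) : d = 1 := by
  obtain ⟨m, rfl⟩ := hp
  rwa [pow_succ, pow_mul, pow_two, h2, one_pow, one_mul] at h1

lemma orderOf_eq_p (hp : p.Prime) {g : A} (h1 : g ^ p = 1) (h : g ≠ 1) : orderOf g = p := by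
  have : Fact p.Prime := ⟨hp⟩
  exact orderOf_eq_prime h1 h

lemma index_zpowers (hp : p.Prime) (hA : Nat.card A = 2 * p) {g : A} (h1 : g ^ p = 1)
    (h : g ≠ 1) : (zpowers g).index = 2 := by
  have e := (zpowers g).card_mul_index
  rw [Nat.card_zpowers, orderOf_eq_p hp h1 h, hA, mul_comm] at e
  exact Nat.eq_of_mul_eq_mul_right hp.pos e

lemma pow_of_mem_zpowers {g h : A} (h1 : g ^ p = 1) (hh : h ∈ zpowers g) : h ^ p = 1 := by
  obtain ⟨n, rfl⟩ := hh
  change (g ^ n) ^ p = 1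
  rw [← zpow_natCast, ← zpow_mul, mul_comm, zpow_mul, zpow_natCast, h1, one_zpow]

lemma mem_zpowers_of_pow (hp : p.Prime) (h2 : p ≠ 2) (hA : Nat.card A = 2 * p) {g h : A}
    (h1 : g ^ p = 1) (hg : g ≠ 1) (hh : h ^ p = 1) : h ∈ zpowers g := by
  have hi := index_zpowers hp hA h1 hg
  obtain ⟨m, hm⟩ := hp.odd_of_ne_two h2
  have hsq : h ^ 2 ∈ zpowers g := by
    rw [pow_two, mul_mem_iff_of_index_two hi]
  rw [hm, pow_succ, pow_mul] at hh
  have : h = ((h ^ 2) ^ m)⁻¹ := (inv_eq_of_mul_eq_one_right hh).symm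
  rw [this]
  exact inv_mem (pow_mem hsq m)

lemma IsInv.not_mem_zpowers (hp : p.Prime) (h2 : p ≠ 2) {g t : A}
    (h1 : g ^ p = 1) (ht : IsInv t) : t ∉ zpowers g := fun h =>
  ht.1 (eq_one_of_sq_of_pow_odd (hp.odd_of_ne_two h2) ht.2 (pow_of_mem_zpowers h1 h))

lemma exists_order_p [Finite A] (hp : p.Prime) (hA : Nat.card A = 2 * p) :
    ∃ g : A, g ^ p = 1 ∧ g ≠ 1 := by
  have : Fact p.Prime := ⟨hp⟩
  obtain ⟨g, hg⟩ := exists_prime_orderOf_dvd_card' p (G := A) (hA ▸ ⟨2, mul_comm _ _⟩)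
  refine ⟨g, hg ▸ pow_orderOf_eq_one g, fun h => ?_⟩
  rw [h, orderOf_one] at hg
  exact hp.one_lt.ne hg

lemma exists_isInv [Finite A] (hA : Nat.card A = 2 * p) : ∃ t : A, IsInv t := by
  have : Fact (Nat.Prime 2) := ⟨Nat.prime_two⟩
  obtain ⟨g, hg⟩ := exists_prime_orderOf_dvd_card' 2 (G := A) (hA ▸ ⟨p, rfl⟩)
  refine ⟨g, fun h => ?_, ?_⟩
  · rw [h, orderOf_one] at hg
    exact absurd hg (by norm_num)
  · rw [← pow_two, ← hg]; exact pow_orderOf_eq_one g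

lemma inv_mul_inv_pow [Finite A] (hp : p.Prime) (h2 : p ≠ 2) (hA : Nat.card A = 2 * p) {s t : A}
    (hs : IsInv s) (ht : IsInv t) : (s * t) ^ p = 1 := by
  obtain ⟨g, h1, hg⟩ := exists_order_p hp hA
  apply pow_of_mem_zpowers h1
  rw [mul_mem_iff_of_index_two (index_zpowers hp hA h1 hg)]
  have := hs.not_mem_zpowers hp h2 h1
  have := ht.not_mem_zpowers hp h2 h1
  tauto

lemma inv_conj_inv [Finite A] (hp : p.Prime) (h2 : p ≠ 2) (hA : Nat.card A = 2 * p) {s t : A}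
    (hs : IsInv s) (ht : IsInv t) : ∃ d : A, d ^ p = 1 ∧ d * s * d⁻¹ = t := by
  have hq := inv_mul_inv_pow hp h2 hA hs ht
  obtain ⟨m, hm⟩ := hp.odd_of_ne_two h2
  have hinv : s * (s * t) * s⁻¹ = (s * t)⁻¹ := by
    rw [mul_inv_rev, hs.inv_eq, ht.inv_eq, ← mul_assoc, hs.2, one_mul]
  have hc : s * (s * t) ^ m * s⁻¹ = ((s * t) ^ m)⁻¹ := by
    rw [← conj_pow, hinv, inv_pow]
  refine ⟨(s * t) ^ m, by rw [← pow_mul, mul_comm, pow_mul, hq, one_pow], ?_⟩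
  rw [← hc, hs.inv_eq]
  have : (s * t) ^ m * s * (s * (s * t) ^ m * s) = (s * t) ^ m * (s * s) * (s * t) ^ m * s := by
    simp only [mul_assoc]
  rw [this, hs.2, mul_one, ← pow_add, ← two_mul]
  have h3 : (s * t) ^ (2 * m) = (s * t)⁻¹ := by
    rw [hm, pow_succ] at hq
    exact eq_inv_of_mul_eq_one_left hq
  rw [h3, mul_inv_rev, hs.inv_eq, ht.inv_eq, mul_assoc, hs.2, mul_one]

lemma inv_comm_eq [Finite A] (hp : p.Prime) (h2 : p ≠ 2) (hA : Nat.card A = 2 * p) {s t : A}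
    (hs : IsInv s) (ht : IsInv t) (hst : s * t = t * s) : s = t := by
  have hq := inv_mul_inv_pow hp h2 hA hs ht
  have : s * t * (s * t) = 1 := by
    rw [show s * t * (s * t) = s * (t * s) * t by group, ← hst, ← mul_assoc, hs.2, one_mul, ht.2]
  have := eq_one_of_sq_of_pow_odd (hp.odd_of_ne_two h2) this hq
  rw [mul_eq_one_iff_eq_inv, ht.inv_eq] at this
  exact this

lemma central_of_comm (hp : p.Prime) (h2 : p ≠ 2) (hA : Nat.card A = 2 * p) {g t : A}
    (hg : g ≠ 1) (h1 : g ^ p = 1) (ht : IsInv t) (hc : t * g = g * t) (h : A) :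
    t * h = h * t := by
  have hi := index_zpowers hp hA h1 hg
  have hz : ∀ d ∈ zpowers g, t * d = d * t := by
    rintro _ ⟨n, rfl⟩
    exact (Commute.zpow_right (show Commute t g from hc) n).eq
  by_cases hh : h ∈ zpowers g
  · exact hz h hh
  · have : h * t ∈ zpowers g := by
      rw [mul_mem_iff_of_index_two hi]
      have := ht.not_mem_zpowers hp h2 h1
      tauto
    have := hz _ this
    rw [← mul_assoc, mul_assoc h t t, ht.2, mul_one] at this
    have h3 := congrArg (· * t) this
    rw [mul_assoc, mul_assoc, ht.2, mul_one] at h3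
    exact h3

/-- The hypothesis that excludes the cyclic group: no involution commutes with an element of
order `p`. -/
def DihType (A : Type*) [Group A] (p : ℕ) : Prop :=
  ∀ g t : A, g ≠ 1 → g ^ p = 1 → IsInv t → t * g ≠ g * t

lemma DihType.isInv (hD : DihType A p) (hp : p.Prime) (h2 : p ≠ 2) (hA : Nat.card A = 2 * p)
    {g h : A} (hg : g ≠ 1) (h1 : g ^ p = 1) (hh : h ∉ zpowers g) : IsInv h := by
  have hi := index_zpowers hp hA h1 hg
  refine ⟨fun e => hh (e ▸ one_mem _), ?_⟩
  by_contra hne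
  have hsq : h * h ∈ zpowers g := by
    rw [mul_mem_iff_of_index_two hi]
  have hpw := pow_of_mem_zpowers h1 hsq
  have hinv : IsInv (h ^ p) := by
    refine ⟨fun e => hh (mem_zpowers_of_pow hp h2 hA h1 hg e), ?_⟩
    rw [← pow_add, ← two_mul, pow_mul, pow_two, hpw]
  refine hD _ _ hne hpw hinv ?_
  rw [← pow_two, ← pow_add, ← pow_add, add_comm]

lemma DihType.card_inv [Fintype A] [DecidablePred (IsInv : A → Prop)] (hD : DihType A p)
    (hp : p.Prime) (h2 : p ≠ 2) (hA : Nat.card A = 2 * p) :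
    (Finset.univ.filter fun t : A => IsInv t).card = p := by
  classical
  obtain ⟨g, h1, hg⟩ := exists_order_p hp hA
  have h3 : (Finset.univ.filter fun t : A => IsInv t)
      = (Finset.univ.filter fun t : A => t ∈ zpowers g)ᶜ := by
    ext t
    simp only [Finset.mem_filter, Finset.mem_univ, true_and, Finset.mem_compl]
    exact ⟨fun h => h.not_mem_zpowers hp h2 h1, fun h => hD.isInv hp h2 hA hg h1 h⟩
  rw [h3, Finset.card_compl, ← Nat.card_eq_fintype_card, hA]
  have : (Finset.univ.filter fun t : A => t ∈ zpowers g).card = p := by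
    rw [← orderOf_eq_p hp h1 hg, ← Nat.card_zpowers, Nat.card_eq_fintype_card,
      Fintype.card_subtype]
  omega

lemma DihType.cent [Finite A] (hD : DihType A p) (hp : p.Prime) (h2 : p ≠ 2)
    (hA : Nat.card A = 2 * p) {t h : A} (ht : IsInv t) (hc : t * h = h * t) : h = 1 ∨ h = t := by
  obtain ⟨g, h1, hg⟩ := exists_order_p hp hA
  by_cases hh : h ∈ zpowers g
  · left
    by_contra hne
    exact hD h t hne (pow_of_mem_zpowers h1 hh) ht hc
  · right
    exact (inv_comm_eq hp h2 hA ht (hD.isInv hp h2 hA hg h1 hh) hc).symm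

end Order2p

/-! ### Fixed points and fixed blocks of an involution -/

section Invol
open Classical Finset MulAction
set_option linter.unusedSectionVars false

variable {G X Y : Type*} [Group G] [Fintype G] [Fintype X] [Fintype Y] [MulAction G X]
  [MulAction G Y] {I : X → Y → Prop} {v k l p : ℕ}

namespace FlagDesign

lemma sum_ind_fix (t : G) (y : X) : ∑ B ∈ fixSet Y t, ind I y B
    = (((univ.filter fun B => I y B).filter fun B => t • B = B).card : ℤ) := by
  rw [fixSet, filter_filter, sum_filter]
  simp [ind, ← ite_and, and_comm]

lemma sum_ind_fix' (t : G) (B : Y) : ∑ x ∈ fixSet X t, ind I x B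
    = (((univ.filter fun x => I x B).filter fun x => t • x = x).card : ℤ) := by
  rw [fixSet, filter_filter, sum_filter]
  simp [ind, ← ite_and, and_comm]

/-- The blocks through a non-fixed point `y` that are fixed by an involution `t` are the
fixed ones among the `l` blocks through `y` and `t y`. -/
lemma fix_through (D : FlagDesign G I v k l p) {t : G} (ht : t * t = 1) {y : X}
    (hy : t • y ≠ y) :
    l ≡ ((univ.filter fun B => I y B).filter fun B => t • B = B).card [MOD 2] ∧
    ((univ.filter fun B => I y B).filter fun B => t • B = B).card ≤ l := by
  have h1 := card_fix_modEq Nat.prime_two (g := t) (by rw [pow_two, ht])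
    (univ.filter fun B => I y B ∧ I (t • y) B) (by
      intro B hB
      simp only [mem_filter, mem_univ, true_and] at hB ⊢
      refine ⟨?_, (D.inv t y B).mpr hB.1⟩
      have := (D.inv t (t • y) B).mpr hB.2
      rwa [← mul_smul, ht, one_smul] at this)
  have h2 : ((univ.filter fun B => I y B ∧ I (t • y) B).filter fun B => t • B = B)
      = ((univ.filter fun B => I y B).filter fun B => t • B = B) := by
    ext B
    simp only [mem_filter, mem_univ, true_and]
    refine ⟨fun h => ⟨h.1.1, h.2⟩, fun h => ⟨⟨h.1, ?_⟩, h.2⟩⟩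
    have := (D.inv t y B).mpr h.1
    rwa [h.2] at this
  rw [D.pair y _ (Ne.symm hy), h2] at h1
  refine ⟨h1, ?_⟩
  rw [← h2]
  exact (card_filter_le _ _).trans (D.pair y _ (Ne.symm hy)).le

/-- Moments of the number `r` of fixed blocks through a non-fixed point:
`∑ r (r - 2) = F ((F - 1) l - (k - d))`. -/
lemma moment (D : FlagDesign G I v k l p) {t : G} {d : ℕ}
    (hd : d ≤ 1) (hX : ∀ x ∈ fixSet X t, ∑ B ∈ fixSet Y t, ind I x B = d)
    (hY : ∀ B ∈ fixSet Y t, ∑ x ∈ fixSet X t, ind I x B = d) :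
    ∑ y ∈ (fixSet X t)ᶜ, (∑ B ∈ fixSet Y t, ind I y B) * (∑ B ∈ fixSet Y t, ind I y B - 2)
      = (fixSet X t).card * (((fixSet X t).card - 1) * l - (k - d)) := by
  have hF := D.card_fix_eq t
  set F := (fixSet X t).card
  have hdd : (d : ℤ) * d = d := by interval_cases d <;> simp
  have hblk : ∀ B, ∑ x, ind I x B = k := fun B => by rw [sum_ind_blk, D.blk]
  have comp : ∀ f : X → ℤ, ∑ y ∈ (fixSet X t)ᶜ, f y = ∑ y, f y - ∑ y ∈ fixSet X t, f y := by
    intro f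
    rw [← sum_compl_add_sum (fixSet X t) f]; ring
  have S1 : ∑ y ∈ (fixSet X t)ᶜ, ∑ B ∈ fixSet Y t, ind I y B = (F : ℤ) * (k - d) := by
    rw [sum_comm]
    simp_rw [comp, hblk]
    rw [sum_congr rfl (g := fun _ => (k : ℤ) - d) (fun B hB => by rw [hY B hB])]
    rw [sum_const, hF, nsmul_eq_mul]
  have S2 : ∑ y ∈ (fixSet X t)ᶜ, (∑ B ∈ fixSet Y t, ind I y B) * (∑ B ∈ fixSet Y t, ind I y B)
      = (F : ℤ) * F * l + F * (k - l) - F * d := by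
    rw [comp]
    have a2 : ∑ x ∈ fixSet X t, (∑ B ∈ fixSet Y t, ind I x B) * (∑ B ∈ fixSet Y t, ind I x B)
        = F * d := by
      rw [sum_congr rfl (g := fun _ => (d : ℤ)) (fun x hx => by rw [hX x hx, hdd])]
      rw [sum_const, nsmul_eq_mul]
    have a1 : ∑ x, (∑ B ∈ fixSet Y t, ind I x B) * (∑ B ∈ fixSet Y t, ind I x B)
        = (F : ℤ) * F * l + F * (k - l) := by
      simp_rw [sum_mul_sum]
      rw [sum_comm]
      have : ∀ B ∈ fixSet Y t, ∑ x, ∑ C ∈ fixSet Y t, ind I x B * ind I x C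
          = (F : ℤ) * l + (k - l) := by
        intro B hB
        rw [sum_comm]
        simp_rw [D.hmeet, sum_add_distrib, sum_ite_eq, if_pos hB, sum_const, hF, nsmul_eq_mul]
      rw [sum_congr rfl this, sum_const, hF, nsmul_eq_mul]
      ring
    rw [a1, a2]
  simp_rw [mul_sub, sum_sub_distrib, S2, ← sum_mul, S1]
  ring

/-- Parity and size restrictions when every fixed point is on exactly `d ≤ 1` fixed blocks and
every fixed block has exactly `d` fixed points. -/
lemma invol_count (D : FlagDesign G I v k l p) {t : G} (ht : t * t = 1) {d : ℕ}
    (hd : d ≤ 1) (hX : ∀ x ∈ fixSet X t, ∑ B ∈ fixSet Y t, ind I x B = d)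
    (hY : ∀ B ∈ fixSet Y t, ∑ x ∈ fixSet X t, ind I x B = d) (hF : 0 < (fixSet X t).card) :
    Even l ∧ k ≤ d + ((fixSet X t).card - 1) * l ∧
      (l = 2 → k = d + ((fixSet X t).card - 1) * 2) := by
  have hM := D.moment hd hX hY
  have hFe := D.card_fix_eq t
  have hr : ∀ y ∈ (fixSet X t)ᶜ, ∃ n : ℕ, ∑ B ∈ fixSet Y t, ind I y B = n ∧ l % 2 = n % 2 ∧ n ≤ l := by
    intro y hy
    have := D.fix_through ht (y := y) (by simpa using hy)
    exact ⟨_, sum_ind_fix t y, this⟩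
  have heven : Even l := by
    by_contra hodd
    rw [Nat.not_even_iff] at hodd
    have hF1 : (fixSet X t).card ≤ 1 := by
      rw [card_le_one]
      by_contra! hne
      obtain ⟨x, hx, y, hy, hxy⟩ := hne
      have hx' := mem_fixSet.mp hx
      have hy' := mem_fixSet.mp hy
      have h1 := card_fix_modEq Nat.prime_two (g := t) (by rw [pow_two, ht])
        (univ.filter fun B => I x B ∧ I y B) (by
          intro B hB
          simp only [mem_filter, mem_univ, true_and] at hB ⊢
          have e1 := (D.inv t x B).mpr hB.1
          have e2 := (D.inv t y B).mpr hB.2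
          rw [hx'] at e1
          rw [hy'] at e2
          exact ⟨e1, e2⟩)
      rw [D.pair x y hxy] at h1
      have h2 : 0 < ((univ.filter fun B => I x B ∧ I y B).filter fun B => t • B = B).card := by
        rw [Nat.pos_iff_ne_zero]
        intro h0
        rw [h0] at h1
        unfold Nat.ModEq at h1
        omega
      obtain ⟨B, hB⟩ := card_pos.mp h2
      simp only [mem_filter, mem_univ, true_and] at hB
      have h3 := hY B (by simp [hB.2])
      have h4 : ∑ x ∈ {x, y}, ind I x B ≤ ∑ x ∈ fixSet X t, ind I x B := by
        apply sum_le_sum_of_subset_of_nonneg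
        · intro z hz
          simp only [mem_insert, mem_singleton] at hz
          rcases hz with rfl | rfl <;> assumption
        · intro z _ _; unfold ind; split_ifs <;> simp
      rw [sum_pair hxy, h3] at h4
      simp only [ind, hB.1.1, hB.1.2, if_true] at h4
      have : (d : ℤ) ≤ 1 := by exact_mod_cast hd
      linarith
    have hF2 : (fixSet Y t).card = 1 := by omega
    obtain ⟨B, hB⟩ := card_eq_one.mp hF2
    have hsub : (fixSet X t)ᶜ ⊆ univ.filter fun y => I y B := by
      intro y hy
      obtain ⟨n, h1, h2, -⟩ := hr y hy
      rw [hB, sum_singleton] at h1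
      simp only [mem_filter, mem_univ, true_and]
      by_contra hn
      simp only [ind, hn, if_false] at h1
      have : n = 0 := by exact_mod_cast h1.symm
      omega
    have := card_le_card hsub
    rw [D.blk, card_compl, D.cardX] at this
    have := D.k_lt
    omega
  refine ⟨heven, ?_⟩
  obtain ⟨m, hm⟩ := heven
  set F := (fixSet X t).card
  have hF0 : (0 : ℤ) < F := by exact_mod_cast hF
  constructor
  · have h0 : (0 : ℤ) ≤ (F : ℤ) * ((F - 1) * l - (k - d)) := by
      rw [← hM]
      apply sum_nonneg
      intro y hy
      obtain ⟨n, h1, h2, -⟩ := hr y hy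
      rw [h1]
      obtain rfl | h : n = 0 ∨ 2 ≤ n := by omega
      · simp
      · have : (2 : ℤ) ≤ n := by exact_mod_cast h
        exact mul_nonneg (by linarith) (by linarith)
    have h1 := nonneg_of_mul_nonneg_right h0 hF0
    have : (k : ℤ) ≤ d + ((F - 1 : ℕ) : ℤ) * l := by
      rw [Nat.cast_sub hF]; push_cast; linarith
    exact_mod_cast this
  · intro hl
    have h0 : (0 : ℤ) = (F : ℤ) * ((F - 1) * l - (k - d)) := by
      rw [← hM]
      symm
      apply sum_eq_zero
      intro y hy
      obtain ⟨n, h1, h2, h3⟩ := hr y hy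
      rw [h1]
      obtain rfl | rfl : n = 0 ∨ n = 2 := by omega
      · simp
      · simp
    have h1 := (mul_eq_zero.mp h0.symm).resolve_left hF0.ne'
    have : (k : ℤ) = d + ((F - 1 : ℕ) : ℤ) * 2 := by
      rw [Nat.cast_sub hF]; rw [hl] at h1; push_cast at h1 ⊢; linarith
    exact_mod_cast this

end FlagDesign
end Invol

/-! ### Point stabilizers and special involutions -/

section Special
open Classical Finset MulAction
set_option linter.unusedSectionVars false

variable {G X Y : Type*} [Group G] [Fintype G] [Fintype X] [Fintype Y] [MulAction G X]
  [MulAction G Y] {I : X → Y → Prop} {v k l p : ℕ}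

/-- An involution with at least one fixed point. -/
def Sp (X : Type*) {G : Type*} [Group G] [MulAction G X] (t : G) : Prop :=
  IsInv t ∧ ∃ x : X, t • x = x

lemma Sp.conj {t : G} (h : Sp X t) (g : G) : Sp X (g * t * g⁻¹) := by
  obtain ⟨h1, x, hx⟩ := h
  exact ⟨h1.conj g, g • x, by simp [mul_smul, hx]⟩

lemma conj_fix {Z : Type*} [MulAction G Z] {t : G} {z : Z} (h : t • z = z) (g : G) :
    (g * t * g⁻¹) • g • z = g • z := by
  simp [mul_smul, h]

lemma fixSet_conj {Z : Type*} [Fintype Z] [MulAction G Z] (t g : G) :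
    (fixSet Z (g * t * g⁻¹)).card = (fixSet Z t).card := by
  symm
  apply card_bij (fun z _ => g • z)
  · intro z hz
    rw [mem_fixSet] at hz ⊢
    exact conj_fix hz g
  · intro a _ b _ h
    exact smul_left_cancel g h
  · intro z hz
    rw [mem_fixSet] at hz
    refine ⟨g⁻¹ • z, ?_, by simp⟩
    rw [mem_fixSet]
    have := congrArg (g⁻¹ • ·) hz
    simpa [mul_smul] using this

lemma IsInv.coe {H : Subgroup G} {t : H} (h : IsInv t) : IsInv (t : G) :=
  ⟨fun e => h.1 (Subtype.ext e), congrArg Subtype.val h.2⟩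

lemma IsInv.mk {H : Subgroup G} {t : G} (h : IsInv t) (ht : t ∈ H) : IsInv (⟨t, ht⟩ : H) :=
  ⟨fun e => h.1 (congrArg Subtype.val e), Subtype.ext h.2⟩

namespace FlagDesign

lemma exists_g (D : FlagDesign G I v k l p) (x : X) :
    ∃ g : G, g • x = x ∧ g ≠ 1 ∧ g ^ p = 1 := by
  obtain ⟨g, h1, h2⟩ := exists_order_p D.prime (D.stab x)
  exact ⟨g, g.2, fun e => h2 (Subtype.ext e), congrArg Subtype.val h1⟩

lemma exists_gB (D : FlagDesign G I v k l p) (B : Y) :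
    ∃ g : G, g • B = B ∧ g ≠ 1 ∧ g ^ p = 1 := by
  obtain ⟨g, h1, h2⟩ := exists_order_p D.prime (D.stabB B)
  exact ⟨g, g.2, fun e => h2 (Subtype.ext e), congrArg Subtype.val h1⟩

lemma exists_t (D : FlagDesign G I v k l p) (x : X) : ∃ t : G, t • x = x ∧ IsInv t := by
  obtain ⟨t, h⟩ := exists_isInv (D.stab x)
  exact ⟨t, t.2, h.coe⟩

lemma exists_tB (D : FlagDesign G I v k l p) (B : Y) : ∃ t : G, t • B = B ∧ IsInv t := by
  obtain ⟨t, h⟩ := exists_isInv (D.stabB B)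
  exact ⟨t, t.2, h.coe⟩

lemma fix_pos {t : G} (ht : Sp X t) : 0 < (fixSet X t).card := by
  obtain ⟨-, x, hx⟩ := ht
  exact card_pos.mpr ⟨x, by simpa using hx⟩

lemma mem_zpowers (D : FlagDesign G I v k l p) (h2 : p ≠ 2) {x : X} {g h : G} (hg : g • x = x)
    (hg1 : g ≠ 1) (hgp : g ^ p = 1) (hh : h • x = x) (hhp : h ^ p = 1) :
    h ∈ Subgroup.zpowers g := by
  have := mem_zpowers_of_pow D.prime h2 (D.stab x) (g := ⟨g, hg⟩) (h := ⟨h, hh⟩)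
    (Subtype.ext hgp) (fun e => hg1 (congrArg Subtype.val e)) (Subtype.ext hhp)
  obtain ⟨n, hn⟩ := this
  exact ⟨n, congrArg Subtype.val hn⟩

lemma st_pow (D : FlagDesign G I v k l p) (h2 : p ≠ 2) {x : X} {s t : G} (hs : s • x = x)
    (ht : t • x = x) (hs' : IsInv s) (ht' : IsInv t) : (s * t) ^ p = 1 :=
  congrArg Subtype.val (inv_mul_inv_pow D.prime h2 (D.stab x) (hs'.mk hs) (ht'.mk ht))

lemma conj_inv (D : FlagDesign G I v k l p) (h2 : p ≠ 2) {x : X} {s t : G} (hs : s • x = x)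
    (ht : t • x = x) (hs' : IsInv s) (ht' : IsInv t) : ∃ d : G, d • x = x ∧ d * s * d⁻¹ = t := by
  obtain ⟨d, -, h⟩ := inv_conj_inv D.prime h2 (D.stab x) (hs'.mk hs) (ht'.mk ht)
  exact ⟨d, d.2, congrArg Subtype.val h⟩

lemma inv_comm (D : FlagDesign G I v k l p) (h2 : p ≠ 2) {x : X} {s t : G} (hs : s • x = x)
    (ht : t • x = x) (hs' : IsInv s) (ht' : IsInv t) (h : s * t = t * s) : s = t :=
  congrArg Subtype.val (inv_comm_eq D.prime h2 (D.stab x) (hs'.mk hs) (ht'.mk ht)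
    (Subtype.ext h))

/-- The special involutions form one conjugacy class. -/
lemma sp_conj (D : FlagDesign G I v k l p) (h2 : p ≠ 2) {s t : G} (hs : Sp X s) (ht : Sp X t) :
    ∃ d : G, d * s * d⁻¹ = t := by
  obtain ⟨hs, x, hx⟩ := hs
  obtain ⟨ht, y, hy⟩ := ht
  obtain ⟨a, ha⟩ := D.trans x y
  have h1 := conj_fix hx a
  rw [ha] at h1
  obtain ⟨d, -, h⟩ := D.conj_inv h2 h1 hy (hs.conj a) ht
  exact ⟨d * a, by rw [← h]; group⟩

lemma fix_const (D : FlagDesign G I v k l p) (h2 : p ≠ 2) {s t : G} (hs : Sp X s)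
    (ht : Sp X t) : (fixSet X s).card = (fixSet X t).card := by
  obtain ⟨d, rfl⟩ := D.sp_conj h2 hs ht
  exact (fixSet_conj s d).symm

/-- Counting the pairs of a special involution and a point fixed by it. -/
lemma sp_count (D : FlagDesign G I v k l p) (h2 : p ≠ 2) {t : G} (ht : Sp X t) {n : ℕ}
    (hn : ∀ x : X, (univ.filter fun s : G => s • x = x ∧ IsInv s).card = n) :
    (univ.filter fun s : G => Sp X s).card * (fixSet X t).card = v * n := by
  have h1 : ∑ s ∈ univ.filter (fun s : G => Sp X s), (fixSet X s).card
      = ∑ x : X, (univ.filter fun s : G => s • x = x ∧ IsInv s).card := by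
    simp only [fixSet, card_filter]
    rw [sum_comm]
    refine sum_congr rfl fun x _ => ?_
    rw [sum_filter]
    refine sum_congr rfl fun s _ => ?_
    rw [← ite_and]
    refine if_congr ?_ rfl rfl
    exact ⟨fun h => ⟨h.2, h.1.1⟩, fun h => ⟨⟨h.2, x, h.1⟩, h.1⟩⟩
  rw [sum_congr rfl (fun s hs => D.fix_const h2 (mem_filter.mp hs).2 ht)] at h1
  simp_rw [hn] at h1
  simpa [D.cardX] using h1

lemma sp_cent (D : FlagDesign G I v k l p) (h2 : p ≠ 2) {t : G} (ht : Sp X t) :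
    (univ.filter fun s : G => Sp X s).card * (univ.filter fun g : G => g * t = t * g).card
      = v * (2 * p) := by
  rw [← D.card_G, Nat.card_eq_fintype_card, ← card_univ]
  rw [card_eq_sum_card_fiberwise (s := (univ : Finset G)) (f := fun g : G => g * t * g⁻¹)
    (t := univ.filter fun s : G => Sp X s) (fun g _ => by simpa using ht.conj g)]
  rw [sum_congr rfl (g := fun _ => (univ.filter fun g : G => g * t = t * g).card)]
  · rw [sum_const, smul_eq_mul]
  · intro s hs
    obtain ⟨d, rfl⟩ := D.sp_conj h2 ht (mem_filter.mp hs).2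
    symm
    apply card_bij (fun g _ => d * g)
    · intro g hg
      simp only [mem_filter, mem_univ, true_and] at hg ⊢
      rw [mul_assoc d g t, hg]; group
    · intro a _ b _ h
      exact mul_left_cancel h
    · intro g hg
      simp only [mem_filter, mem_univ, true_and] at hg
      refine ⟨d⁻¹ * g, ?_, by simp⟩
      simp only [mem_filter, mem_univ, true_and]
      calc d⁻¹ * g * t = d⁻¹ * (g * t * g⁻¹) * g := by group
        _ = _ := by rw [hg]; group

/-- If `p ∤ l`, an element of order `p` has at most one fixed point: otherwise it would fix one of
the `l` blocks through two fixed points, but flag stabilizers have exponent two. -/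
lemma fix_unique (D : FlagDesign G I v k l p) (h2 : p ≠ 2) (hl : ¬ p ∣ l) {g : G} (hg : g ≠ 1)
    (hgp : g ^ p = 1) {x y : X} (hx : g • x = x) (hy : g • y = y) : x = y := by
  by_contra hxy
  have h1 := card_fix_modEq D.prime (g := g) hgp
    (univ.filter fun B => I x B ∧ I y B) (by
      intro B hB
      simp only [mem_filter, mem_univ, true_and] at hB ⊢
      have e1 := (D.inv g x B).mpr hB.1
      have e2 := (D.inv g y B).mpr hB.2
      rw [hx] at e1
      rw [hy] at e2
      exact ⟨e1, e2⟩)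
  rw [D.pair x y hxy] at h1
  have h3 : 0 < ((univ.filter fun B => I x B ∧ I y B).filter fun B => g • B = B).card := by
    rw [Nat.pos_iff_ne_zero]
    intro h0
    rw [h0] at h1
    exact hl ((Nat.modEq_zero_iff_dvd).mp h1)
  obtain ⟨B, hB⟩ := card_pos.mp h3
  simp only [mem_filter, mem_univ, true_and] at hB
  have := D.flag_sq hB.1.1 hx hB.2
  rw [pow_two] at this
  exact hg (eq_one_of_sq_of_pow_odd (D.prime.odd_of_ne_two h2) this hgp)

lemma fix_le_one (D : FlagDesign G I v k l p) (h2 : p ≠ 2) (hl : ¬ p ∣ l) {g : G} (hg : g ≠ 1)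
    (hgp : g ^ p = 1) : (fixSet X g).card ≤ 1 :=
  card_le_one.mpr fun _ hx _ hy =>
    D.fix_unique h2 hl hg hgp (mem_fixSet.mp hx) (mem_fixSet.mp hy)

lemma fix_uniqueB (D : FlagDesign G I v k l p) (h2 : p ≠ 2) (hl : ¬ p ∣ l) {g : G} (hg : g ≠ 1)
    (hgp : g ^ p = 1) {B C : Y} (hx : g • B = B) (hy : g • C = C) : B = C := by
  have := D.fix_le_one h2 hl hg hgp
  rw [← D.card_fix_eq] at this
  exact card_le_one.mp this B (mem_fixSet.mpr hx) C (mem_fixSet.mpr hy)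

lemma v_mod (D : FlagDesign G I v k l p) (h2 : p ≠ 2) (hl : ¬ p ∣ l) : ∃ m, v = 1 + p * m := by
  obtain ⟨x⟩ := D.nonempty
  obtain ⟨g, hx, hg, hgp⟩ := D.exists_g x
  have h1 := card_fix_modEq D.prime hgp (univ : Finset X) (fun _ _ => mem_univ _)
  have h3 : (univ.filter fun z : X => g • z = z).card = 1 := by
    refine le_antisymm (D.fix_le_one h2 hl hg hgp) (card_pos.mpr ⟨x, by simpa using hx⟩)
  rw [h3, card_univ, D.cardX] at h1
  have hv : 1 ≤ v := by have := D.k_lt; omega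
  obtain ⟨m, hm⟩ := (Nat.modEq_iff_dvd' hv).mp h1.symm
  exact ⟨m, by omega⟩

/-- The stabilizer of a point is the stabilizer of the unique block fixed by its elements of
order `p`. -/
lemma exists_beta (D : FlagDesign G I v k l p) (h2 : p ≠ 2) (hl : ¬ p ∣ l) {x : X} {B : Y} {g : G}
    (hg : g ≠ 1) (hgp : g ^ p = 1) (hx : g • x = x) (hB : g • B = B) (h : G) :
    h • x = x ↔ h • B = B := by
  have hle : stabilizer G x ≤ stabilizer G B := by
    intro h hh
    rw [mem_stabilizer_iff] at hh ⊢
    have e1 : h * g * h⁻¹ ∈ Subgroup.zpowers g := by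
      have hh' : h⁻¹ • x = x := by rw [inv_smul_eq_iff, hh]
      refine D.mem_zpowers h2 hx hg hgp (by simp [mul_smul, hh', hx, hh]) ?_
      rw [conj_pow, hgp]; group
    have e2 : h * g * h⁻¹ ∈ stabilizer G B :=
      (Subgroup.zpowers_le.mpr (show g ∈ stabilizer G B from hB)) e1
    refine D.fix_uniqueB h2 hl (g := h * g * h⁻¹) ?_ ?_ (conj_fix hB h) e2
    · intro e
      apply hg
      have := congrArg (fun z => h⁻¹ * z * h) e
      simpa [mul_assoc] using this
    · rw [conj_pow, hgp]; group
  have heq : stabilizer G x = stabilizer G B :=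
    Subgroup.eq_of_le_of_card_ge hle (by rw [D.stab, D.stabB])
  rw [← mem_stabilizer_iff, ← mem_stabilizer_iff, heq]

lemma beta_pt (D : FlagDesign G I v k l p) (h2 : p ≠ 2) (hl : ¬ p ∣ l) (x : X) :
    ∃ B : Y, ∀ h : G, h • x = x ↔ h • B = B := by
  obtain ⟨g, hx, hg, hgp⟩ := D.exists_g x
  have : 0 < (fixSet Y g).card := by
    rw [D.card_fix_eq]; exact card_pos.mpr ⟨x, by simpa using hx⟩
  obtain ⟨B, hB⟩ := card_pos.mp this
  exact ⟨B, D.exists_beta h2 hl hg hgp hx (by simpa using hB)⟩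

lemma beta_blk (D : FlagDesign G I v k l p) (h2 : p ≠ 2) (hl : ¬ p ∣ l) (B : Y) :
    ∃ x : X, ∀ h : G, h • x = x ↔ h • B = B := by
  obtain ⟨g, hx, hg, hgp⟩ := D.exists_gB B
  have : 0 < (fixSet X g).card := by
    rw [← D.card_fix_eq]; exact card_pos.mpr ⟨B, by simpa using hx⟩
  obtain ⟨x, h⟩ := card_pos.mp this
  exact ⟨x, D.exists_beta h2 hl hg hgp (by simpa using h) hx⟩

/-- If `k = 2p` an involution has no fixed flags. -/
lemma invol_2p (D : FlagDesign G I v k l p) (hk : k = 2 * p) {t : G} (ht : Sp X t) :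
    Even l ∧ 2 * p ≤ ((fixSet X t).card - 1) * l ∧
      (l = 2 → 2 * p = ((fixSet X t).card - 1) * 2) := by
  have h0 : ∀ x ∈ fixSet X t, ∀ B ∈ fixSet Y t, ind I x B = 0 := by
    intro x hx B hB
    rw [mem_fixSet] at hx hB
    unfold ind
    rw [if_neg]
    exact fun h => ht.1.1 (D.flag_one hk h hx hB)
  have := D.invol_count ht.1.2 (d := 0) (by norm_num)
    (fun x hx => by rw [sum_eq_zero (h0 x hx)]; rfl)
    (fun B hB => by rw [sum_eq_zero (fun x hx => h0 x hx B hB)]; rfl) (fix_pos ht)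
  simpa [hk] using this

/-- For `p = 2` the parameters would be `(7,4,2)`. An involution fixing a point fixes at least three
points, hence two blocks, and the `4 + 4 - 2` points of their union are moved by it: too many. -/
lemma p_ne_two (D : FlagDesign G I v k l p) : p ≠ 2 := by
  rintro rfl
  have hk : k = 2 * 2 := by
    rcases D.k_cases with h | h
    · have := D.two_lt; omega
    · exact h
  obtain ⟨x⟩ := D.nonempty
  obtain ⟨t, hx, ht⟩ := D.exists_t x
  obtain ⟨⟨a, ha⟩, h2, -⟩ := D.invol_2p hk (X := X) ⟨ht, x, hx⟩
  have hl := D.l_lt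
  have hl0 := D.l_pos
  have hl2 : l = 2 := by omega
  have hkk := D.kk
  rw [hk, hl2] at hkk
  have hv : v = 7 := by omega
  rw [hl2] at h2
  have hF : 3 ≤ (fixSet X t).card := by omega
  have hF' : 1 < (fixSet Y t).card := by rw [D.card_fix_eq]; omega
  obtain ⟨B, hB, C, hC, hBC⟩ := one_lt_card.mp hF'
  have hm := D.meet B C hBC
  have hsub : (univ.filter fun x => I x B) ∪ (univ.filter fun x => I x C) ⊆ (fixSet X t)ᶜ := by
    intro y hy
    rw [mem_compl, mem_fixSet]
    intro hy'
    simp only [mem_union, mem_filter, mem_univ, true_and] at hy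
    rcases hy with h | h
    · exact ht.1 (D.flag_one hk h hy' (mem_fixSet.mp hB))
    · exact ht.1 (D.flag_one hk h hy' (mem_fixSet.mp hC))
  have h3 := card_le_card hsub
  have h4 := card_union_add_card_inter (univ.filter fun x => I x B) (univ.filter fun x => I x C)
  rw [← filter_and, hm, D.blk, D.blk] at h4
  rw [card_compl, D.cardX] at h3
  omega

end FlagDesign
end Special

/-! ### Cyclic point stabilizers -/

section Cyclic
open Classical Finset MulAction
set_option linter.unusedSectionVars false

variable {G X Y : Type*} [Group G] [Fintype G] [Fintype X] [Fintype Y] [MulAction G X]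
  [MulAction G Y] {I : X → Y → Prop} {v k l p : ℕ}

/-- No involution commutes with an element of order `p` of the same point stabilizer. -/
def DihStab (X : Type*) (G : Type*) [Group G] [MulAction G X] (p : ℕ) : Prop :=
  ∀ (x : X) (g t : G), g • x = x → t • x = x → g ≠ 1 → g ^ p = 1 → IsInv t → t * g ≠ g * t

namespace FlagDesign

lemma ndvd (D : FlagDesign G I v k l p) : ¬ p ∣ l := by
  intro hpl
  have hl := D.l_lt
  have hl0 := D.l_pos
  rcases D.k_cases with hk | hk
  · have := Nat.le_of_dvd hl0 hpl
    omega
  · obtain ⟨x⟩ := D.nonempty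
    obtain ⟨t, hx, ht⟩ := D.exists_t x
    obtain ⟨he, -, -⟩ := D.invol_2p hk (X := X) ⟨ht, x, hx⟩
    obtain ⟨c, hc⟩ := hpl
    have hp := D.prime.pos
    have : c < 2 := by
      by_contra! h
      have := Nat.mul_le_mul_left p h
      omega
    have hc1 : c = 1 := by
      rcases Nat.lt_or_ge c 1 with h | h
      · have : c = 0 := by omega
        subst this; omega
      · omega
    rw [hc, hc1, mul_one] at he
    have := D.prime.odd_of_ne_two D.p_ne_two
    exact Nat.not_even_iff_odd.mpr this he

lemma cyc_central (D : FlagDesign G I v k l p) (hC : ¬ DihStab X G p) {x : X} {t h : G}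
    (hx : t • x = x) (ht : IsInv t) (hh : h • x = x) : t * h = h * t := by
  unfold DihStab at hC
  push Not at hC
  obtain ⟨y, g, s, hg, hs, hg1, hgp, hs', hsg⟩ := hC
  obtain ⟨a, ha⟩ := D.trans y x
  have hc : ∀ h : G, h • y = y → s * h = h * s := fun h hh =>
    congrArg Subtype.val (central_of_comm D.prime D.p_ne_two (D.stab y) (g := ⟨g, hg⟩)
      (t := ⟨s, hs⟩) (fun e => hg1 (congrArg Subtype.val e)) (Subtype.ext hgp) (hs'.mk hs)
      (Subtype.ext hsg) ⟨h, hh⟩)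
  have hxy : a⁻¹ • x = y := by rw [← ha, inv_smul_smul]
  have key : ∀ h : G, h • x = x → (a * s * a⁻¹) * h = h * (a * s * a⁻¹) := by
    intro h hh
    have h1 := hc (a⁻¹ * h * a) (by simp [mul_smul, ha, hh, hxy])
    calc (a * s * a⁻¹) * h = a * (s * (a⁻¹ * h * a)) * a⁻¹ := by group
      _ = _ := by rw [h1]; group
  have h2 := conj_fix hs a
  rw [ha] at h2
  have := D.inv_comm D.p_ne_two h2 hx (hs'.conj a) ht (key t hx)
  rw [← this]
  exact key h hh

lemma cyc_card (D : FlagDesign G I v k l p) (hC : ¬ DihStab X G p) (x : X) :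
    (univ.filter fun s : G => s • x = x ∧ IsInv s).card = 1 := by
  obtain ⟨t, hx, ht⟩ := D.exists_t x
  refine card_eq_one.mpr ⟨t, ?_⟩
  ext s
  simp only [mem_filter, mem_univ, true_and, mem_singleton]
  constructor
  · rintro ⟨hs, hs'⟩
    exact D.inv_comm D.p_ne_two hs hx hs' ht (D.cyc_central hC hs hs' hx)
  · rintro rfl; exact ⟨hx, ht⟩

/-- An involution fixing a point `x` fixes a block on `x` when `k` is odd. -/
lemma exists_fix_block (D : FlagDesign G I v k l p) (hk : k = p) {t : G} (ht : IsInv t) {x : X}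
    (hx : t • x = x) : ∃ B, I x B ∧ t • B = B := by
  have h1 := card_fix_modEq Nat.prime_two (g := t) (by rw [pow_two, ht.2])
    (univ.filter fun B => I x B) (by
      intro B hB
      simp only [mem_filter, mem_univ, true_and] at hB ⊢
      have e1 := (D.inv t x B).mpr hB
      rwa [hx] at e1)
  rw [D.rep] at h1
  obtain ⟨m, hm⟩ := D.prime.odd_of_ne_two D.p_ne_two
  have h2 : 0 < ((univ.filter fun B => I x B).filter fun B => t • B = B).card := by
    rw [Nat.pos_iff_ne_zero]
    intro h0
    rw [h0] at h1
    unfold Nat.ModEq at h1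
    omega
  obtain ⟨B, hB⟩ := card_pos.mp h2
  simp only [mem_filter, mem_univ, true_and] at hB
  exact ⟨B, hB⟩

lemma exists_fix_point (D : FlagDesign G I v k l p) (hk : k = p) {t : G} (ht : IsInv t) {B : Y}
    (hB : t • B = B) : ∃ x : X, I x B ∧ t • x = x := by
  have h1 := card_fix_modEq Nat.prime_two (g := t) (by rw [pow_two, ht.2])
    (univ.filter fun x => I x B) (by
      intro x hx
      simp only [mem_filter, mem_univ, true_and] at hx ⊢
      have e1 := (D.inv t x B).mpr hx
      rwa [hB] at e1)
  rw [D.blk] at h1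
  obtain ⟨m, hm⟩ := D.prime.odd_of_ne_two D.p_ne_two
  have h2 : 0 < ((univ.filter fun x => I x B).filter fun x => t • x = x).card := by
    rw [Nat.pos_iff_ne_zero]
    intro h0
    rw [h0] at h1
    unfold Nat.ModEq at h1
    omega
  obtain ⟨x, hx⟩ := card_pos.mp h2
  simp only [mem_filter, mem_univ, true_and] at hx
  exact ⟨x, hx⟩

/-- If `k = p` and the stabilizers are cyclic, an involution fixing a point fixes all
blocks through it, and all points of these blocks, hence all points. -/
lemma not_cyc_p (D : FlagDesign G I v k l p) (hC : ¬ DihStab X G p) (hk : k = p) : False := by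
  obtain ⟨x⟩ := D.nonempty
  obtain ⟨t, hx, ht⟩ := D.exists_t x
  refine ht.1 (D.faithful t fun y => ?_)
  by_cases hxy : x = y
  · rw [← hxy, hx]
  have h1 := D.pair x y hxy
  obtain ⟨C, hC'⟩ := card_pos.mp (h1 ▸ D.l_pos)
  simp only [mem_filter, mem_univ, true_and] at hC'
  have hCfix : t • C = C := by
    obtain ⟨B, hB, htB⟩ := D.exists_fix_block hk ht hx
    obtain ⟨g, hg, rfl⟩ := D.flag x B x C hB hC'.1
    rw [← mul_smul, D.cyc_central hC hx ht hg, mul_smul, htB]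
  obtain ⟨z, hz⟩ := D.beta_blk D.p_ne_two D.ndvd C
  obtain ⟨g, hg, hgC⟩ := D.flag x C y C hC'.1 hC'.2
  rw [← hg, ← mul_smul, D.cyc_central hC ((hz t).mpr hCfix) ht ((hz g).mpr hgC), mul_smul, hx]

lemma fix_lt (D : FlagDesign G I v k l p) {t : G} (ht : t ≠ 1) : (fixSet X t).card < v := by
  rw [← D.cardX, card_lt_iff_ne_univ]
  intro h
  refine ht (D.faithful t fun x => ?_)
  rw [← mem_fixSet, h]
  exact mem_univ x

/-- The identity `k (k - 1) = λ (v - 1)` for `k = 2p` and `v = 1 + pm`. -/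
lemma param_2p (D : FlagDesign G I v k l p) (hk : k = 2 * p) :
    ∃ m a, v = 1 + p * m ∧ l = 2 * a ∧ a * m = 2 * p - 1 := by
  obtain ⟨m, hm⟩ := D.v_mod D.p_ne_two D.ndvd
  obtain ⟨x⟩ := D.nonempty
  obtain ⟨t, hx, ht⟩ := D.exists_t x
  obtain ⟨⟨a, ha⟩, -, -⟩ := D.invol_2p hk (X := X) ⟨ht, x, hx⟩
  refine ⟨m, a, hm, by omega, ?_⟩
  have hkk := D.kk
  have hp := D.prime.pos
  rw [hm, hk, ha] at hkk
  have h1 : (2 * p) * (a * m + 1) = (2 * p) * (2 * p) := by nlinarith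
  have := Nat.eq_of_mul_eq_mul_left (by omega) h1
  omega

/-- In a cyclic stabilizer the elements of order `p` act on the fixed points of the involution with
one fixed point, so `F = 1 + pb`; as `F` divides `v = 1 + pm`, it divides `m - b`. This forces
`λ = 2` and `F = p + 1`, whence `p + 1 ∣ 4`. -/
lemma cyc_2p (D : FlagDesign G I v k l p) (hC : ¬ DihStab X G p) (hk : k = 2 * p) :
    v = 16 ∧ k = 6 ∧ l = 2 ∧ p = 3 := by
  obtain ⟨m, a, hv, hl, ham⟩ := D.param_2p hk
  obtain ⟨x⟩ := D.nonempty
  obtain ⟨t, hx, ht⟩ := D.exists_t x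
  have hsp : Sp X t := ⟨ht, x, hx⟩
  obtain ⟨-, h2, h3⟩ := D.invol_2p hk hsp
  have hIF := D.sp_count D.p_ne_two hsp (D.cyc_card hC)
  have hFv := D.fix_lt ht.1
  have hp := D.prime
  have hp3 : 3 ≤ p := by have := hp.two_le; have := D.p_ne_two; omega
  obtain ⟨g, hgx, hg, hgp⟩ := D.exists_g x
  have hmod := card_fix_modEq hp hgp (fixSet X t) (by
    intro z hz
    rw [mem_fixSet] at hz ⊢
    rw [← mul_smul, D.cyc_central hC hx ht hgx, mul_smul, hz])
  have h1 : ((fixSet X t).filter fun z => g • z = z) = {x} := by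
    ext z
    simp only [mem_filter, mem_fixSet, mem_singleton]
    constructor
    · rintro ⟨-, hz⟩; exact D.fix_unique D.p_ne_two D.ndvd hg hgp hz hgx
    · rintro rfl; exact ⟨hx, hgx⟩
  rw [h1, card_singleton] at hmod
  have hF0 := fix_pos hsp
  set F := (fixSet X t).card
  obtain ⟨b, hb⟩ := (Nat.modEq_iff_dvd' (show 1 ≤ F from hF0)).mp hmod.symm
  have hF : F = 1 + p * b := by omega
  have hb1 : 1 ≤ b := by
    rcases Nat.eq_zero_or_pos b with h | h
    · rw [h] at hF
      rw [hF] at h2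
      simp at h2; omega
    · exact h
  have hmb : b < m := by
    by_contra! h
    have := Nat.mul_le_mul_left p h
    omega
  obtain ⟨c, rfl⟩ := Nat.exists_eq_add_of_lt hmb
  have hdvd : F ∣ c + 1 := by
    have e1 : F ∣ p * (c + 1) := by
      have : F ∣ v := ⟨_, by rw [mul_comm, hIF, mul_one]⟩
      have e2 : v = F + p * (c + 1) := by rw [hv, hF]; ring
      rw [e2] at this
      exact (Nat.dvd_add_right (dvd_refl F)).mp this
    have hco : Nat.Coprime F p := by rw [hF]; simp
    exact hco.dvd_of_dvd_mul_left e1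
  have hc := Nat.le_of_dvd (by omega) hdvd
  have hbp := Nat.mul_le_mul_left p hb1
  have ha : a = 1 := by
    rcases Nat.lt_or_ge a 2 with h | h
    · rcases Nat.eq_zero_or_pos a with h' | h'
      · rw [h'] at ham; omega
      · omega
    · have := Nat.mul_le_mul_right (b + c + 1) h
      omega
  have hl2 : l = 2 := by omega
  have hFp : F = p + 1 := by have := h3 hl2; omega
  rw [ha, one_mul] at ham
  have h4 : p + 1 ∣ 4 := by
    have e1 : F ∣ v := ⟨_, by rw [mul_comm, hIF, mul_one]⟩
    rw [hFp, hv, ham] at e1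
    obtain ⟨q, rfl⟩ : ∃ q, p = q + 2 := ⟨p - 2, by omega⟩
    have e2 : 1 + (q + 2) * (2 * (q + 2) - 1) = (q + 2 + 1) * (2 * q + 1) + 4 := by
      have : 2 * (q + 2) - 1 = 2 * q + 3 := by omega
      rw [this]; ring
    rw [e2] at e1
    exact (Nat.dvd_add_right ⟨_, rfl⟩).mp e1
  have := Nat.le_of_dvd (by norm_num) h4
  have hp3 : p = 3 := by omega
  subst hp3
  refine ⟨?_, by omega, hl2, rfl⟩
  rw [hv, ham]

end FlagDesign
end Cyclic

/-! ### Dihedral point stabilizers -/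

section Dihedral
open Classical Finset MulAction
set_option linter.unusedSectionVars false

variable {G X Y : Type*} [Group G] [Fintype G] [Fintype X] [Fintype Y] [MulAction G X]
  [MulAction G Y] {I : X → Y → Prop} {v k l p : ℕ}

/-- The special involutions other than `t` that commute with `t`. -/
noncomputable def commSp (X : Type*) {G : Type*} [Group G] [Fintype G] [MulAction G X] (t : G) :
    Finset G :=
  univ.filter fun s => Sp X s ∧ s ≠ t ∧ s * t = t * s

lemma commSp_conj (t g : G) : (commSp X (g * t * g⁻¹)).card = (commSp X t).card := by
  symm
  apply card_bij (fun s _ => g * s * g⁻¹)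
  · intro s hs
    simp only [commSp, mem_filter, mem_univ, true_and] at hs ⊢
    refine ⟨hs.1.conj g, fun h => hs.2.1 (by simpa using h), ?_⟩
    calc g * s * g⁻¹ * (g * t * g⁻¹) = g * (s * t) * g⁻¹ := by group
      _ = _ := by rw [hs.2.2]; group
  · intro a _ b _ h
    simpa using h
  · intro s hs
    simp only [commSp, mem_filter, mem_univ, true_and] at hs
    refine ⟨g⁻¹ * s * g, ?_, by group⟩
    simp only [commSp, mem_filter, mem_univ, true_and]
    refine ⟨by simpa using hs.1.conj g⁻¹, fun h => hs.2.1 (by rw [← h]; group), ?_⟩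
    calc g⁻¹ * s * g * t = g⁻¹ * (s * (g * t * g⁻¹)) * g := by group
      _ = _ := by rw [hs.2.2]; group

namespace FlagDesign

lemma dih_type (hd : DihStab X G p) (x : X) : DihType (stabilizer G x) p := by
  intro g t hg hgp ht h
  exact hd x g t g.2 t.2 (fun e => hg (Subtype.ext e)) (congrArg Subtype.val hgp) ht.coe
    (congrArg Subtype.val h)

lemma dih_card (D : FlagDesign G I v k l p) (hd : DihStab X G p) (x : X) :
    (univ.filter fun s : G => s • x = x ∧ IsInv s).card = p := by
  rw [← (dih_type hd x).card_inv D.prime D.p_ne_two (D.stab x)]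
  symm
  apply card_bij (fun (s : stabilizer G x) _ => (s : G))
  · intro s hs
    simp only [mem_filter, mem_univ, true_and] at hs ⊢
    exact ⟨s.2, hs.coe⟩
  · intro a _ b _ h; exact Subtype.ext h
  · intro s hs
    simp only [mem_filter, mem_univ, true_and] at hs
    exact ⟨⟨s, hs.1⟩, by simpa using hs.2.mk (H := stabilizer G x) hs.1, rfl⟩

lemma dih_cent (D : FlagDesign G I v k l p) (hd : DihStab X G p) {x : X} {t h : G}
    (hx : t • x = x) (ht : IsInv t) (hh : h • x = x) (hc : t * h = h * t) : h = 1 ∨ h = t := by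
  rcases (dih_type hd x).cent D.prime D.p_ne_two (D.stab x) (ht.mk hx) (h := ⟨h, hh⟩)
    (Subtype.ext hc) with h | h
  · exact Or.inl (congrArg Subtype.val h)
  · exact Or.inr (congrArg Subtype.val h)

lemma dih_inv (D : FlagDesign G I v k l p) (hd : DihStab X G p) {x : X} {h : G}
    (hh : h • x = x) : h ^ p = 1 ∨ IsInv h := by
  obtain ⟨g, h1, hg⟩ := exists_order_p D.prime (D.stab x)
  by_cases hm : (⟨h, hh⟩ : stabilizer G x) ∈ Subgroup.zpowers g
  · exact Or.inl (congrArg Subtype.val (pow_of_mem_zpowers h1 hm))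
  · exact Or.inr ((dih_type hd x).isInv D.prime D.p_ne_two (D.stab x) hg h1 hm).coe

lemma inv_two_fix (D : FlagDesign G I v k l p) {x y : X} (hxy : x ≠ y) {s t : G}
    (hs : IsInv s) (ht : IsInv t) (hsx : s • x = x) (hsy : s • y = y) (htx : t • x = x)
    (hty : t • y = y) : s = t := by
  by_contra hne
  have h1 := D.st_pow D.p_ne_two hsx htx hs ht
  refine hxy (D.fix_unique D.p_ne_two D.ndvd (g := s * t) ?_ h1 (by rw [mul_smul, htx, hsx])
    (by rw [mul_smul, hty, hsy]))
  intro h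
  rw [mul_eq_one_iff_eq_inv, ht.inv_eq] at h
  exact hne h

lemma dih_cent_card (D : FlagDesign G I v k l p) (hd : DihStab X G p) {t : G} (ht : Sp X t) :
    (univ.filter fun g : G => g * t = t * g).card = 2 * (fixSet X t).card := by
  have h1 := D.sp_count D.p_ne_two ht (D.dih_card hd)
  have h2 := D.sp_cent D.p_ne_two ht
  have hI : 0 < (univ.filter fun s : G => Sp X s).card := card_pos.mpr ⟨t, by simpa using ht⟩
  apply Nat.eq_of_mul_eq_mul_left hI
  rw [h2]
  calc v * (2 * p) = 2 * (v * p) := by ring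
    _ = _ := by rw [← h1]; ring

lemma dih_comm_card (D : FlagDesign G I v k l p) (hd : DihStab X G p) {t : G} (ht : Sp X t) :
    (commSp X t).card + 2 ≤ 2 * (fixSet X t).card := by
  rw [← D.dih_cent_card hd ht]
  have h1 : insert 1 (insert t (commSp X t)) ⊆ univ.filter fun g : G => g * t = t * g := by
    intro s hs
    simp only [mem_insert] at hs
    simp only [mem_filter, mem_univ, true_and]
    rcases hs with rfl | rfl | h
    · simp
    · rfl
    · exact (mem_filter.mp h).2.2.2
  have h2 := card_le_card h1
  rw [card_insert_of_notMem, card_insert_of_notMem] at h2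
  · exact h2
  · simp [commSp]
  · simp only [mem_insert, not_or]
    refine ⟨ht.1.1.symm, fun h => ?_⟩
    exact (mem_filter.mp h).2.1.1.1 rfl

/-- The points other than `x` fixed by some involution fixing `x`. -/
noncomputable def moved (G : Type*) [Group G] [Fintype G] [MulAction G X] (x : X) : Finset X :=
  (univ.filter fun s : G => s • x = x ∧ IsInv s).biUnion fun s => (fixSet X s).erase x

lemma card_moved (D : FlagDesign G I v k l p) (hd : DihStab X G p) {t : G} (ht : Sp X t) (x : X) :
    (moved G x).card = p * ((fixSet X t).card - 1) := by
  rw [moved, card_biUnion]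
  · rw [sum_congr rfl (g := fun _ => (fixSet X t).card - 1), sum_const, D.dih_card hd, smul_eq_mul]
    intro s hs
    simp only [mem_filter, mem_univ, true_and] at hs
    rw [card_erase_of_mem (by simpa using hs.1), D.fix_const D.p_ne_two ⟨hs.2, x, hs.1⟩ ht]
  · intro s hs r hr hsr
    rw [mem_coe, mem_filter] at hs hr
    rw [Function.onFun, disjoint_left]
    intro y hy hy'
    rw [mem_erase, mem_fixSet] at hy hy'
    exact hsr (D.inv_two_fix hy.1.symm hs.2.2 hr.2.2 hs.2.1 hy.2 hr.2.1 hy'.2)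

lemma dih_bound (D : FlagDesign G I v k l p) (hd : DihStab X G p) {t : G} (ht : Sp X t) :
    1 + p * ((fixSet X t).card - 1) ≤ v := by
  obtain ⟨x⟩ := D.nonempty
  rw [← D.card_moved hd ht x, ← D.cardX, add_comm, ← card_insert_of_notMem (a := x)]
  · exact card_le_univ _
  · simp [moved]

/-- For `k = 2p` the `2p` points of the block with the same stabilizer as a point `x` are not fixed
by any involution fixing `x`, as flag stabilizers are trivial. -/
lemma dih_bound_2p (D : FlagDesign G I v k l p) (hd : DihStab X G p) (hk : k = 2 * p) {t : G}
    (ht : Sp X t) : 1 + 2 * p + p * ((fixSet X t).card - 1) ≤ v := by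
  obtain ⟨x⟩ := D.nonempty
  obtain ⟨B, hB⟩ := D.beta_pt D.p_ne_two D.ndvd x
  have h1 : x ∉ moved G x := by simp [moved]
  have h2 : Disjoint (univ.filter fun y => I y B) (insert x (moved G x)) := by
    rw [disjoint_left]
    intro y hy hy'
    simp only [mem_filter, mem_univ, true_and] at hy
    rw [mem_insert] at hy'
    rcases hy' with rfl | h
    · obtain ⟨s, hs, hsi⟩ := D.exists_t y
      exact hsi.1 (D.flag_one hk hy hs ((hB s).mp hs))
    · simp only [moved, mem_biUnion, mem_filter, mem_univ, true_and, mem_erase, mem_fixSet] at h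
      obtain ⟨s, ⟨hs, hsi⟩, -, hsy⟩ := h
      exact hsi.1 (D.flag_one hk hy hsy ((hB s).mp hs))
  have h3 := card_le_univ ((univ.filter fun y => I y B) ∪ insert x (moved G x))
  rw [card_union_of_disjoint h2, card_insert_of_notMem h1, D.card_moved hd ht, D.blk, D.cardX] at h3
  omega

/-- A special involution `s` moving `y` either is the only one mapping `y` to `s y`, or commutes
with the involution that fixes both `y` and `s y`. Counting the involutions accordingly bounds
their number. -/
lemma dih_star (D : FlagDesign G I v k l p) (hd : DihStab X G p) {t : G} (ht : Sp X t) :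
    (univ.filter fun s : G => Sp X s).card + p * (fixSet X t).card
      ≤ v - 1 + 2 * p + p * (commSp X t).card := by
  obtain ⟨y⟩ := D.nonempty
  set J := univ.filter fun s : G => s • y = y ∧ IsInv s
  have hJ : J.card = p := D.dih_card hd y
  -- `S2` collects the involutions `s` commuting with one that fixes `y`; those in `S1` are determined
  -- by the point `s y`, since `s y = s' y` makes `s s'` fix both `y` and `s y`
  set S2 := J.biUnion fun r => commSp X r
  have hS2 : S2.card ≤ p * (commSp X t).card := by
    rw [← hJ]
    refine card_biUnion_le_card_mul _ _ _ fun r hr => ?_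
    simp only [J, mem_filter, mem_univ, true_and] at hr
    obtain ⟨d, rfl⟩ := D.sp_conj D.p_ne_two ht ⟨hr.2, y, hr.1⟩
    rw [commSp_conj]
  set S1 := univ.filter fun s : G => (Sp X s ∧ s • y ≠ y) ∧ s • y ∉ moved G y
  have hyM : y ∉ moved G y := by simp [moved]
  have hS1 : S1.card ≤ ((insert y (moved G y))ᶜ).card := by
    apply card_le_card_of_injOn (fun s => s • y)
    · intro s hs
      simp only [S1, coe_filter, mem_univ, true_and, Set.mem_ofPred_eq] at hs
      simp [hs.1.2, hs.2]
    · intro s hs s' hs' hss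
      simp only [S1, coe_filter, mem_univ, true_and, Set.mem_ofPred_eq] at hs hs'
      simp only at hss
      have e1 : (s * s') • y = y := by
        rw [mul_smul, ← hss, ← mul_smul, hs.1.1.1.2, one_smul]
      have e2 : (s * s') • (s • y) = s • y := by
        rw [hss, mul_smul, ← mul_smul s' s', hs'.1.1.1.2, one_smul, hss]
      by_contra hne
      have hne1 : s * s' ≠ 1 := by
        intro h
        rw [mul_eq_one_iff_eq_inv, hs'.1.1.1.inv_eq] at h
        exact hne h
      rcases D.dih_inv hd e1 with h | h
      · exact hs.1.2 (D.fix_unique D.p_ne_two D.ndvd hne1 h e2 e1)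
      · apply hs.2
        simp only [moved, mem_biUnion, mem_filter, mem_univ, true_and, mem_erase, mem_fixSet]
        exact ⟨s * s', ⟨e1, h⟩, hs.1.2, e2⟩
  have hcov : (univ.filter fun s : G => Sp X s) ⊆ J ∪ (S1 ∪ S2) := by
    intro s hs
    simp only [mem_filter, mem_univ, true_and] at hs
    by_cases h1 : s • y = y
    · exact mem_union_left _ (by simp [J, h1, hs.1])
    by_cases h2 : s • y ∈ moved G y
    · refine mem_union_right _ (mem_union_right _ ?_)
      simp only [moved, mem_biUnion, mem_filter, mem_univ, true_and, mem_erase, mem_fixSet] at h2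
      obtain ⟨r, ⟨hr, hri⟩, -, hrs⟩ := h2
      refine mem_biUnion.mpr ⟨r, by simp [J, hr, hri], ?_⟩
      simp only [commSp, mem_filter, mem_univ, true_and]
      refine ⟨hs, fun e => h1 (e ▸ hr), ?_⟩
      have hsi := hs.1.inv_eq
      have e3 : s * r * s⁻¹ = r := by
        apply D.inv_two_fix (Ne.symm h1) (hri.conj s) hri _ (conj_fix hr s) hr hrs
        rw [hsi, mul_smul, mul_smul, hrs, ← mul_smul, hs.1.2, one_smul]
      exact mul_inv_eq_iff_eq_mul.mp e3
    · exact mem_union_right _ (mem_union_left _ (by simp [S1, h1, h2, hs]))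
  have h1 := card_le_card hcov
  have h2 := card_union_le J (S1 ∪ S2)
  have h3 := card_union_le S1 S2
  rw [card_compl, card_insert_of_notMem hyM, D.card_moved hd ht, D.cardX] at hS1
  have h4 := D.dih_bound hd ht
  have hF := fix_pos ht
  obtain ⟨f, hf⟩ : ∃ f, (fixSet X t).card = f + 1 := ⟨_, (Nat.succ_pred_eq_of_pos hF).symm⟩
  rw [hf] at h4 hS1 ⊢
  rw [Nat.add_sub_cancel] at h4 hS1
  rw [mul_add, mul_one]
  omega

end FlagDesign
end Dihedral

/-! ### Parameters for dihedral point stabilizers -/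

section DihedralParam
open Classical Finset MulAction
set_option linter.unusedSectionVars false

variable {G X Y : Type*} [Group G] [Fintype G] [Fintype X] [Fintype Y] [MulAction G X]
  [MulAction G Y] {I : X → Y → Prop} {v k l p : ℕ}

namespace FlagDesign

/-- If `k = p`, an involution `t` has exactly one fixed block through each fixed point, and
dually: an element `h` of the stabilizer that maps one such block to another conjugates `t` to
`t`, as the flag stabilizers have order two. -/
lemma invol_p (D : FlagDesign G I v k l p) (hd : DihStab X G p) (hk : k = p) {t : G}
    (ht : Sp X t) : Even l ∧ p ≤ 1 + ((fixSet X t).card - 1) * l := by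
  have hconj : ∀ h : G, ∀ x B, I x B → t • x = x → t • B = B →
      (h⁻¹ * t * h) • x = x → (h⁻¹ * t * h) • B = B → t * h = h * t := by
    intro h x B hI hx hB hx' hB'
    have h1 := ht.1.conj h⁻¹
    rw [inv_inv] at h1
    have := D.flag_two hk hI hx hB hx' hB' ht.1.1 h1.1
    calc t * h = h * (h⁻¹ * t * h) := by group
      _ = _ := by rw [← this]
  have hX : ∀ x ∈ fixSet X t, ∑ B ∈ fixSet Y t, ind I x B = ((1 : ℕ) : ℤ) := by
    intro x hx
    rw [mem_fixSet] at hx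
    rw [sum_ind_fix, Nat.cast_inj, card_eq_one]
    obtain ⟨B, hB, htB⟩ := D.exists_fix_block hk ht.1 hx
    refine ⟨B, ?_⟩
    ext C
    simp only [mem_filter, mem_univ, true_and, mem_singleton]
    constructor
    · rintro ⟨hC, htC⟩
      obtain ⟨h, hh, rfl⟩ := D.flag x B x C hB hC
      have hh' : h⁻¹ • x = x := by rw [inv_smul_eq_iff, hh]
      have hc := hconj h x B hB hx htB (by rw [mul_smul, mul_smul, hh, hx, hh'])
        (by rw [mul_smul, mul_smul, htC, inv_smul_smul])
      rcases D.dih_cent hd hx ht.1 hh hc with rfl | rfl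
      · rw [one_smul]
      · exact htB
    · rintro rfl; exact ⟨hB, htB⟩
  have hY : ∀ B ∈ fixSet Y t, ∑ x ∈ fixSet X t, ind I x B = ((1 : ℕ) : ℤ) := by
    intro B hB
    rw [mem_fixSet] at hB
    rw [sum_ind_fix', Nat.cast_inj, card_eq_one]
    obtain ⟨z, hz⟩ := D.beta_blk D.p_ne_two D.ndvd B
    obtain ⟨x, hx, htx⟩ := D.exists_fix_point hk ht.1 hB
    refine ⟨x, ?_⟩
    ext y
    simp only [mem_filter, mem_univ, true_and, mem_singleton]
    constructor
    · rintro ⟨hy, hty⟩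
      obtain ⟨h, rfl, hh⟩ := D.flag x B y B hx hy
      have hh' : h⁻¹ • B = B := by rw [inv_smul_eq_iff, hh]
      have hc := hconj h x B hx htx hB (by rw [mul_smul, mul_smul, hty, inv_smul_smul])
        (by rw [mul_smul, mul_smul, hh, hB, hh'])
      rcases D.dih_cent hd ((hz t).mpr hB) ht.1 ((hz h).mpr hh) hc with rfl | rfl
      · rw [one_smul]
      · exact htx
    · rintro rfl; exact ⟨hx, htx⟩
  obtain ⟨h1, h2, -⟩ := D.invol_count ht.1.2 le_rfl hX hY (fix_pos ht)
  exact ⟨h1, by omega⟩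

lemma exists_sp (D : FlagDesign G I v k l p) : ∃ t : G, Sp X t := by
  obtain ⟨x⟩ := D.nonempty
  obtain ⟨t, hx, ht⟩ := D.exists_t x
  exact ⟨t, ht, x, hx⟩

/-- The bound of `dih_star` with the trivial estimate of the number of commuting involutions by the
order `2F` of the centralizer. -/
lemma dih_le (D : FlagDesign G I v k l p) (hd : DihStab X G p) {t : G} (ht : Sp X t) {m : ℕ}
    (hv : v = 1 + p * m) : v ≤ (fixSet X t).card * (m + (fixSet X t).card) := by
  have h1 := D.dih_star hd ht
  have h2 := D.dih_comm_card hd ht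
  have h3 := D.sp_count D.p_ne_two ht (D.dih_card hd)
  set F := (fixSet X t).card
  set S := (univ.filter fun s : G => Sp X s).card
  have h4 := Nat.mul_le_mul_left p h2
  have h5 : S ≤ p * (m + F) := by
    have : v - 1 = p * m := by omega
    rw [this] at h1
    nlinarith
  refine Nat.le_of_mul_le_mul_right ?_ D.prime.pos
  rw [← h3]
  calc S * F ≤ p * (m + F) * F := Nat.mul_le_mul_right F h5
    _ = _ := by ring

/-- For `k = p` the identity `k (k - 1) = λ (v - 1)` gives `p = 1 + λm`, and the bounds on the number
`F` of fixed points of a special involution give `F = m + 1`, so that `v ≤ F (m + F)` forces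
`λ = 2`. Then `F ∣ vp` becomes `m + 1 ∣ 2`. -/
lemma not_dih_p (D : FlagDesign G I v k l p) (hd : DihStab X G p) (hk : k = p) : False := by
  obtain ⟨t, ht⟩ := D.exists_sp
  obtain ⟨⟨a, ha⟩, h2⟩ := D.invol_p hd hk ht
  obtain ⟨m, hv⟩ := D.v_mod D.p_ne_two D.ndvd
  have h3 := D.sp_count D.p_ne_two ht (D.dih_card hd)
  have h4 := D.dih_bound hd ht
  have h5 := D.dih_le hd ht hv
  have hF := fix_pos ht
  have hp := D.prime.pos
  have hl := D.l_lt
  have hl0 := D.l_pos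
  obtain ⟨f, hf⟩ : ∃ f, (fixSet X t).card = f + 1 := ⟨_, (Nat.succ_pred_eq_of_pos hF).symm⟩
  rw [hf] at h2 h3 h4 h5
  rw [Nat.add_sub_cancel] at h2 h4
  have hkk := D.kk
  rw [hv, hk] at hkk
  have hplm : p = 1 + l * m := by
    refine Nat.eq_of_mul_eq_mul_left hp ?_
    nlinarith
  have hmf : m ≤ f := by
    refine Nat.le_of_mul_le_mul_left ?_ hl0
    nlinarith
  have hfm : f ≤ m := by
    refine Nat.le_of_mul_le_mul_left ?_ hp
    nlinarith
  obtain rfl : f = m := le_antisymm hfm hmf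
  have hf0 : 0 < f := by
    rcases Nat.eq_zero_or_pos f with h | h
    · rw [h] at hplm; omega
    · exact h
  have hp3 : p ≤ 2 * f + 3 := by
    refine Nat.le_of_mul_le_mul_left ?_ hf0
    nlinarith
  have hl2 : l = 2 := by
    by_contra hne
    have : 4 ≤ l := by omega
    have := Nat.mul_le_mul_right f this
    have hf1 : f = 1 := by omega
    rw [hf1] at hplm
    omega
  have hdvd : f + 1 ∣ 2 := by
    have e1 : f + 1 ∣ v * p := ⟨_, by rw [← h3]; ring⟩
    have e2 : v * p + 2 = (f + 1) * (4 * f ^ 2 + 3) := by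
      rw [hv, hplm, hl2]; ring
    exact (Nat.dvd_add_right e1).mp ⟨_, e2⟩
  have := Nat.le_of_dvd two_pos hdvd
  have hf1 : f = 1 := by omega
  rw [hf1] at hplm
  omega

/-- Here `2p = am + 1` with `a = λ / 2` odd. As `F ≤ m - 1`, the bound `v ≤ F (m + F)` excludes
`a ≥ 4`; for `a = 1` one has `F = p + 1`, and `F ∣ vp` becomes `p + 1 ∣ 4`. -/
lemma dih_2p (D : FlagDesign G I v k l p) (hd : DihStab X G p) (hk : k = 2 * p) :
    (v = 16 ∧ k = 6 ∧ l = 2 ∧ p = 3) ∨ ∃ m, v = 1 + p * m ∧ 3 * m = 2 * p - 1 := by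
  obtain ⟨m, a, hv, hl, ham⟩ := D.param_2p hk
  obtain ⟨t, ht⟩ := D.exists_sp
  obtain ⟨-, -, h2⟩ := D.invol_2p hk ht
  have h3 := D.sp_count D.p_ne_two ht (D.dih_card hd)
  have h4 := D.dih_bound_2p hd hk ht
  have h5 := D.dih_le hd ht hv
  have hF := fix_pos ht
  have hp := D.prime.two_le
  obtain ⟨f, hf⟩ : ∃ f, (fixSet X t).card = f + 1 := ⟨_, (Nat.succ_pred_eq_of_pos hF).symm⟩
  rw [hf] at h2 h3 h4 h5
  rw [Nat.add_sub_cancel] at h2 h4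
  have hfm : f + 2 ≤ m := by
    refine Nat.le_of_mul_le_mul_left (c := p) ?_ (by omega)
    nlinarith
  obtain ⟨n, rfl⟩ := Nat.exists_eq_add_of_le hfm
  have ha4 : a < 4 := by
    by_contra! h
    have e1 := Nat.mul_le_mul_right (f + 2 + n) h
    have e3 : 2 * p * (f + 2 + n) = (a * (f + 2 + n) + 1) * (f + 2 + n) := by
      rw [ham]; congr 1; omega
    have e4 : 4 * (f + 2 + n) * (f + 2 + n) ≤ a * (f + 2 + n) * (f + 2 + n) :=
      Nat.mul_le_mul_right _ e1
    rw [hv] at h5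
    nlinarith
  have hodd : Odd (a * (f + 2 + n)) := by
    rw [ham]; exact ⟨p - 1, by omega⟩
  obtain ⟨b, hb⟩ := (Nat.odd_mul.mp hodd).1
  obtain rfl | rfl : a = 1 ∨ a = 3 := by omega
  · left
    have hfp : f = p := by have := h2 (by omega); omega
    have hdvd : p + 1 ∣ 4 := by
      have e1 : p + 1 ∣ v * p := ⟨_, by rw [← h3, hfp]; ring⟩
      rw [one_mul] at ham
      have e2 : (v * p + 4 : ℤ) = (p + 1) * (2 * p ^ 2 - 3 * p + 4) := by
        rw [hv, ham]
        push_cast [Nat.cast_sub (show 1 ≤ 2 * p by omega)]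
        ring
      have e3 : ((p + 1 : ℕ) : ℤ) ∣ ((v * p + 4 : ℕ) : ℤ) := ⟨_, by push_cast; exact e2⟩
      exact (Nat.dvd_add_right e1).mp (by exact_mod_cast e3)
    have := Nat.le_of_dvd (by norm_num) hdvd
    have hp2 := D.p_ne_two
    have hp3 : p = 3 := by omega
    refine ⟨?_, by omega, by omega, hp3⟩
    rw [hv, hp3]; omega
  · right
    exact ⟨_, hv, ham⟩

end FlagDesign
end DihedralParam

/-! ### Groups with many involutions -/

section ManyInv
open Classical Finset MulAction

/-- If more than three quarters of the elements of a finite group satisfy `a² = 1`, all do: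
each such element `s` commutes with more than half of the group, so it is central, and every element
is a product of two of them. -/
lemma sq_eq_one_of_many {A : Type*} [Group A] [Fintype A]
    (h : 3 * Fintype.card A < 4 * (univ.filter fun a : A => a * a = 1).card) (a : A) :
    a * a = 1 := by
  set S := univ.filter fun a : A => a * a = 1
  have key : ∀ s : A, Fintype.card A < 2 * (S.filter fun x => s * x ∈ S).card := by
    intro s
    have h1 : (S.filter fun x => ¬ s * x ∈ S).card ≤ (Sᶜ).card := by
      apply card_le_card_of_injOn (fun x => s * x)
      · intro x hx
        rw [mem_coe, mem_filter] at hx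
        simpa using hx.2
      · intro x _ y _ hxy
        exact mul_left_cancel hxy
    have h2 := card_filter_add_card_filter_not (s := S) (fun x => s * x ∈ S)
    rw [card_compl] at h1
    have h3 : S.card ≤ Fintype.card A := card_le_univ S
    omega
  have hcen : ∀ s ∈ S, ∀ x, s * x = x * s := by
    intro s hs
    have hs1 : s * s = 1 := (mem_filter.mp hs).2
    set H := Subgroup.centralizer ({s} : Set A)
    have h1 : (S.filter fun x => s * x ∈ S).card ≤ Nat.card H := by
      rw [Nat.card_eq_fintype_card, Fintype.card_subtype]
      apply card_le_card
      intro x hx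
      simp only [S, mem_filter, mem_univ, true_and] at hx
      simp only [H, mem_filter, mem_univ, true_and, Subgroup.mem_centralizer_singleton_iff]
      have e1 : s⁻¹ = s := inv_eq_of_mul_eq_one_left hs1
      have e2 : x⁻¹ = x := inv_eq_of_mul_eq_one_left hx.1
      have e3 := inv_eq_of_mul_eq_one_left hx.2
      rw [mul_inv_rev, e1, e2] at e3
      exact e3
    have h2 := key s
    have h3 := H.card_mul_index
    rw [Nat.card_eq_fintype_card (α := A)] at h3
    have h4 : H.index = 1 := by
      have h5 : H.index ≠ 0 := Subgroup.index_ne_zero_of_finite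
      by_contra h6
      have : 2 ≤ H.index := by omega
      have := Nat.mul_le_mul_left (Nat.card H) this
      omega
    rw [Subgroup.index_eq_one] at h4
    intro x
    have : x ∈ H := h4 ▸ Subgroup.mem_top x
    rw [Subgroup.mem_centralizer_singleton_iff] at this
    exact this.symm
  have h1 := key a
  have h2 : 0 < (S.filter fun x => a * x ∈ S).card := by omega
  obtain ⟨x, hx⟩ := card_pos.mp h2
  rw [mem_filter] at hx
  have e1 := (mem_filter.mp hx.1).2
  have e2 := (mem_filter.mp hx.2).2
  have e3 := hcen x hx.1 a
  calc a * a = a * a * (x * x) := by rw [e1, mul_one]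
    _ = a * (a * x) * x := by group
    _ = a * (x * a) * x := by rw [e3]
    _ = a * x * (a * x) := by group
    _ = 1 := e2

/-- If a `2`-group fixes the point `w` and all its other orbits have length greater than `4`, these
lengths are divisible by `8`. -/
lemma eight_dvd {E W : Type*} [Group E] [Finite E] [Fintype W] [MulAction E W] {n : ℕ}
    (hE : Nat.card E = 2 ^ n) (w : W) (hw : ∀ e : E, e • w = w)
    (h : ∀ w' : W, w' ≠ w → 4 * Nat.card (stabilizer E w') < 2 ^ n) :
    8 ∣ Fintype.card W - 1 := by
  have := Fintype.ofFinite E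
  have h1 := card_eq_sum_card_group_div_card_stabilizer E W
  rw [← add_sum_erase univ _ (mem_univ (Quotient.mk'' w : Quotient (orbitRel E W)))] at h1
  have hout : ∀ q : Quotient (orbitRel E W), q.out = w → q = Quotient.mk'' w := by
    intro q hq
    rw [← hq]; exact (Quotient.out_eq' q).symm
  have hout' : (Quotient.mk'' w : Quotient (orbitRel E W)).out = w := by
    have : (Quotient.mk'' w : Quotient (orbitRel E W)).out ∈ orbit E w :=
      orbitRel_apply.mp (Quotient.mk_out (s := orbitRel E W) w)
    obtain ⟨e, he⟩ := this
    simp only at he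
    rw [← he, hw]
  have h2 : Fintype.card E / Fintype.card
      (stabilizer E (Quotient.mk'' w : Quotient (orbitRel E W)).out) = 1 := by
    rw [hout', ← Nat.card_eq_fintype_card, ← Nat.card_eq_fintype_card]
    have : stabilizer E w = ⊤ := by
      ext e; simp [hw]
    rw [this, Subgroup.card_top, Nat.div_self Nat.card_pos]
  rw [h1, h2, Nat.add_sub_cancel_left]
  apply dvd_sum
  intro q hq
  have hq1 : q.out ≠ w := fun e => (mem_erase.mp hq).1 (hout q e)
  have h3 := h q.out hq1
  have h4 := Subgroup.card_subgroup_dvd_card (stabilizer E q.out)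
  rw [← Nat.card_eq_fintype_card, ← Nat.card_eq_fintype_card, hE]
  rw [hE] at h4
  obtain ⟨j, hj, hj'⟩ := (Nat.dvd_prime_pow Nat.prime_two).mp h4
  rw [hj'] at h3 ⊢
  rw [Nat.pow_div hj two_pos]
  have : j + 2 < n := by
    rw [show 4 * 2 ^ j = 2 ^ (j + 2) by ring] at h3
    exact (Nat.pow_lt_pow_iff_right (by norm_num)).mp h3
  exact pow_dvd_pow 2 (by omega : 3 ≤ n - j)

lemma exists_card_two_pow {A : Type*} [Group A] [Finite A] (h : ∀ a : A, a * a = 1) :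
    ∃ n, Nat.card A = 2 ^ n := by
  have : Fact (Nat.Prime 2) := ⟨Nat.prime_two⟩
  have hp : IsPGroup 2 A := fun a => ⟨1, by rw [pow_one, pow_two, h]⟩
  exact IsPGroup.iff_card.mp hp

end ManyInv

/-! ### The parameters with `3m = 2p - 1` -/

section Triple
open Classical Finset MulAction
set_option linter.unusedSectionVars false

variable {G X Y : Type*} [Group G] [Fintype G] [Fintype X] [Fintype Y] [MulAction G X]
  [MulAction G Y] {I : X → Y → Prop} {v k l p : ℕ}

/-- The special involutions in the centralizer of `t`. -/
noncomputable def spClass (X : Type*) {G : Type*} [Group G] [Fintype G] [MulAction G X] (t : G) :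
    Finset G :=
  univ.filter fun s => Sp X s ∧ s * t = t * s

lemma mem_spClass {s t : G} : s ∈ spClass X t ↔ Sp X s ∧ s * t = t * s := by
  simp [spClass]

lemma card_spClass {t : G} (ht : Sp X t) : (spClass X t).card = (commSp X t).card + 1 := by
  have : spClass X t = insert t (commSp X t) := by
    ext s
    simp only [mem_insert, commSp, mem_spClass, mem_filter, mem_univ, true_and]
    constructor
    · intro h
      by_cases hs : s = t
      · exact Or.inl hs
      · exact Or.inr ⟨h.1, hs, h.2⟩
    · rintro (rfl | h)
      · exact ⟨ht, rfl⟩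
      · exact ⟨h.1, h.2.2⟩
  rw [this, card_insert_of_notMem (by simp [commSp])]

lemma spClass_conj (t g : G) :
    (spClass X t).image (fun s => g * s * g⁻¹) = spClass X (g * t * g⁻¹) := by
  ext s
  simp only [mem_image, mem_spClass]
  constructor
  · rintro ⟨r, ⟨hr, hrt⟩, rfl⟩
    refine ⟨hr.conj g, ?_⟩
    calc g * r * g⁻¹ * (g * t * g⁻¹) = g * (r * t) * g⁻¹ := by group
      _ = _ := by rw [hrt]; group
  · rintro ⟨hs, hst⟩
    refine ⟨g⁻¹ * s * g, ⟨by simpa using hs.conj g⁻¹, ?_⟩, by group⟩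
    calc g⁻¹ * s * g * t = g⁻¹ * (s * (g * t * g⁻¹)) * g := by group
      _ = _ := by rw [hst]; group

namespace FlagDesign

/-- If `1` and the special involutions make up more than three quarters of the centralizer of `t`,
which has order `2F`, then the centralizer has exponent two. -/
lemma cent_sq (D : FlagDesign G I v k l p) (hd : DihStab X G p) {t : G} (ht : Sp X t)
    (h : 3 * (fixSet X t).card < 2 * ((commSp X t).card + 2)) {a : G} (ha : a * t = t * a) :
    a * a = 1 := by
  set E := Subgroup.centralizer ({t} : Set G)
  have hmem : ∀ {g : G}, g ∈ E ↔ g * t = t * g := by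
    intro g; rw [Subgroup.mem_centralizer_singleton_iff]
  have hE : Fintype.card E = 2 * (fixSet X t).card := by
    rw [← D.dih_cent_card hd ht, Fintype.card_subtype]
    congr 1
    ext g
    simp [hmem]
  have hS : (commSp X t).card + 2 ≤ (univ.filter fun a : E => a * a = 1).card := by
    have h1 : insert 1 (insert t (commSp X t))
        ⊆ (univ.filter fun a : E => a * a = 1).image (fun a : E => (a : G)) := by
      intro s hs
      simp only [mem_insert] at hs
      simp only [mem_image, mem_filter, mem_univ, true_and]
      have : s * t = t * s ∧ s * s = 1 := by
        rcases hs with rfl | rfl | h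
        · simp
        · exact ⟨rfl, ht.1.2⟩
        · exact ⟨(mem_filter.mp h).2.2.2, (mem_filter.mp h).2.1.1.2⟩
      exact ⟨⟨s, hmem.mpr this.1⟩, Subtype.ext this.2, rfl⟩
    have h2 := (card_le_card h1).trans card_image_le
    rw [card_insert_of_notMem, card_insert_of_notMem] at h2
    · exact h2
    · simp [commSp]
    · simp only [mem_insert, not_or]
      refine ⟨ht.1.1.symm, fun h => ?_⟩
      exact (mem_filter.mp h).2.1.1.1 rfl
  have := sq_eq_one_of_many (A := E)
    (lt_of_lt_of_le (b := 4 * ((commSp X t).card + 2)) (by rw [hE]; omega)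
      (Nat.mul_le_mul_left 4 (by convert hS))) ⟨a, hmem.mpr ha⟩
  exact congrArg Subtype.val this

lemma cent_comm {t : G} (h : ∀ a : G, a * t = t * a → a * a = 1) {a b : G} (ha : a * t = t * a)
    (hb : b * t = t * b) : a * b = b * a := by
  have h1 := h a ha
  have h2 := h b hb
  have h3 := h (a * b) (by rw [mul_assoc, hb, ← mul_assoc, ha, mul_assoc])
  have e := inv_eq_of_mul_eq_one_left h3
  rw [mul_inv_rev, inv_eq_of_mul_eq_one_left h1, inv_eq_of_mul_eq_one_left h2] at e
  exact e.symm

/-- When all centralizers of special involutions have exponent two, commuting is an equivalence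
relation on special involutions. -/
lemma spClass_eq (h : ∀ t : G, Sp X t → ∀ a : G, a * t = t * a → a * a = 1) {s t : G}
    (ht : Sp X t) (hs : s ∈ spClass X t) : spClass X s = spClass X t := by
  rw [mem_spClass] at hs
  ext r
  rw [mem_spClass, mem_spClass]
  refine and_congr_right fun hr => ⟨fun hrs => ?_, fun hrt => ?_⟩
  · exact cent_comm (h s hs.1) hrs hs.2.symm
  · exact cent_comm (h t ht) hrt hs.2

/-- The set of commuting classes of special involutions. -/
noncomputable def classes (X G : Type*) [Group G] [Fintype G] [MulAction G X] :
    Finset (Finset G) :=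
  (univ.filter fun t : G => Sp X t).image (spClass X)

lemma card_classes (h : ∀ t : G, Sp X t → ∀ a : G, a * t = t * a → a * a = 1) {u : ℕ}
    (hu : ∀ t : G, Sp X t → (spClass X t).card = u) :
    (univ.filter fun t : G => Sp X t).card = (classes X G).card * u := by
  rw [card_eq_sum_card_image (spClass X) (univ.filter fun t : G => Sp X t), ← classes]
  rw [sum_congr rfl (g := fun _ => u), sum_const, smul_eq_mul]
  intro κ hκ
  simp only [classes, mem_image, mem_filter, mem_univ, true_and] at hκ
  obtain ⟨t, ht, rfl⟩ := hκ
  rw [← hu t ht]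
  congr 1
  ext s
  simp only [mem_filter, mem_univ, true_and]
  constructor
  · rintro ⟨hs, e⟩
    rw [← e, mem_spClass]
    exact ⟨hs, rfl⟩
  · intro hs
    exact ⟨(mem_spClass.mp hs).1, spClass_eq h ht hs⟩

lemma fix_even (ht2 : 2 ∣ v) (D : FlagDesign G I v k l p) {t : G} (ht : Sp X t) :
    2 ∣ (fixSet X t).card := by
  have := card_fix_modEq Nat.prime_two (g := t) (by rw [pow_two, ht.1.2]) (univ : Finset X)
    (fun _ _ => mem_univ _)
  rw [card_univ, D.cardX] at this
  have h2 : (univ.filter fun x : X => t • x = x) = fixSet X t := rfl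
  rw [h2] at this
  exact (Nat.modEq_zero_iff_dvd).mp (this.symm.trans ((Nat.modEq_zero_iff_dvd).mpr ht2))

/-- If each commuting class of special involutions has exactly one member in each point
stabilizer, then a special involution that normalizes a class belongs to it. -/
lemma mem_of_norm {κ : Finset G}
    (h1 : ∀ x : X, ∃ r ∈ κ, r • x = x)
    (h2 : ∀ x : X, ∀ r ∈ κ, ∀ s ∈ κ, r • x = x → s • x = x → r = s) {t : G} (ht : Sp X t)
    (hn : κ.image (fun s => t * s * t⁻¹) = κ) : ∃ r ∈ κ, r * t = t * r := by
  obtain ⟨ht, x, hx⟩ := ht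
  obtain ⟨r, hr, hrx⟩ := h1 x
  have h3 := conj_fix hrx t
  rw [hx] at h3
  have h4 : t * r * t⁻¹ ∈ κ := by
    rw [← hn]; exact mem_image_of_mem _ hr
  have := h2 x _ h4 r hr h3 hrx
  exact ⟨r, hr, (mul_inv_eq_iff_eq_mul.mp this).symm⟩

lemma cent_two_pow (D : FlagDesign G I v k l p) (hd : DihStab X G p)
    (h : ∀ t : G, Sp X t → ∀ a : G, a * t = t * a → a * a = 1) {t : G} (ht : Sp X t) :
    ∃ n, 2 * (fixSet X t).card = 2 ^ n := by
  set E := Subgroup.centralizer ({t} : Set G)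
  have hmem : ∀ {g : G}, g ∈ E ↔ g * t = t * g := by
    intro g; rw [Subgroup.mem_centralizer_singleton_iff]
  have hE : Nat.card E = 2 * (fixSet X t).card := by
    rw [← D.dih_cent_card hd ht, Nat.card_eq_fintype_card, Fintype.card_subtype]
    congr 1
    ext g
    simp [hmem]
  obtain ⟨n, hn⟩ := exists_card_two_pow (A := E)
    (fun a => Subtype.ext (h t ht a (hmem.mp a.2)))
  exact ⟨n, by rw [← hE, hn]⟩

/-- The centralizer `E` of a special involution `t` acts on the commuting classes, fixing that of
`t`. An involution of `E` fixing another class would lie in it, so the stabilizers of the other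
classes avoid the `u` special elements of `E`; hence these have orbits of length
divisible by `8`. -/
lemma eight_dvd_classes (D : FlagDesign G I v k l p) (hd : DihStab X G p)
    (h : ∀ t : G, Sp X t → ∀ a : G, a * t = t * a → a * a = 1) {u N : ℕ}
    (hu : ∀ t : G, Sp X t → (spClass X t).card = u)
    (h1 : ∀ t : G, Sp X t → ∀ x : X, ∃ r ∈ spClass X t, r • x = x)
    {t : G} (ht : Sp X t) (hN : (fixSet X t).card = N) (huN : 3 * N < 2 * u) :
    8 ∣ (classes X G).card - 1 := by
  set E := Subgroup.centralizer ({t} : Set G)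
  have hmem : ∀ {g : G}, g ∈ E ↔ g * t = t * g := by
    intro g; rw [Subgroup.mem_centralizer_singleton_iff]
  have hE : Nat.card E = 2 * N := by
    rw [← hN, ← D.dih_cent_card hd ht, Nat.card_eq_fintype_card, Fintype.card_subtype]
    congr 1
    ext g
    simp [hmem]
  obtain ⟨n, hn⟩ := D.cent_two_pow hd h ht
  rw [hN, ← hE] at hn
  have hcl : ∀ (g : G) (κ : classes X G),
      (κ : Finset G).image (fun s => g * s * g⁻¹) ∈ classes X G := by
    rintro g ⟨κ, hκ⟩
    simp only [classes, mem_image, mem_filter, mem_univ, true_and] at hκ ⊢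
    obtain ⟨s, hs, rfl⟩ := hκ
    exact ⟨_, hs.conj g, (spClass_conj s g).symm⟩
  let _ : MulAction E (classes X G) :=
    { smul := fun e κ => ⟨_, hcl e κ⟩
      one_smul := by
        intro κ
        apply Subtype.ext
        change (κ : Finset G).image (fun s => ((1 : E) : G) * s * ((1 : E) : G)⁻¹) = κ
        simp
      mul_smul := by
        intro a b κ
        apply Subtype.ext
        change (κ : Finset G).image (fun s => ((a * b : E) : G) * s * ((a * b : E) : G)⁻¹)
          = ((κ : Finset G).image (fun s => (b : G) * s * (b : G)⁻¹)).image
            (fun s => (a : G) * s * (a : G)⁻¹)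
        rw [image_image]
        congr 1
        ext s
        simp [mul_assoc] }
  have hsm : ∀ (e : E) (κ : classes X G),
      ((e • κ : classes X G) : Finset G) = (κ : Finset G).image (fun s => (e : G) * s * (e : G)⁻¹) :=
    fun _ _ => rfl
  have ht' : spClass X t ∈ classes X G := mem_image_of_mem _ (by simpa using ht)
  rw [← Fintype.card_coe]
  refine eight_dvd hn ⟨_, ht'⟩ ?_ ?_
  · intro e
    apply Subtype.ext
    rw [hsm]
    change (spClass X t).image (fun s => (e : G) * s * (e : G)⁻¹) = spClass X t
    rw [spClass_conj, hmem.mp e.2, mul_inv_cancel_right]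
  · rintro ⟨κ, hκ⟩ hne
    obtain ⟨s, hs', rfl⟩ := mem_image.mp hκ
    have hs : Sp X s := (mem_filter.mp hs').2
    have hne' : spClass X s ≠ spClass X t := fun e => hne (Subtype.ext e)
    set T := stabilizer E (⟨spClass X s, hκ⟩ : classes X G)
    have hdisj : Disjoint (spClass X t) ((univ.filter fun e : E => e ∈ T).image
        (fun e : E => (e : G))) := by
      rw [disjoint_left]
      intro r hr hr'
      simp only [mem_image, mem_filter, mem_univ, true_and] at hr'
      obtain ⟨e, he, rfl⟩ := hr'
      have hsp := (mem_spClass.mp hr).1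
      have hfix : (spClass X s).image (fun s => (e : G) * s * (e : G)⁻¹) = spClass X s :=
        congrArg Subtype.val (mem_stabilizer_iff.mp he)
      have h2 : ∀ x : X, ∀ a ∈ spClass X s, ∀ b ∈ spClass X s, a • x = x → b • x = x → a = b := by
        intro x a ha b hb hax hbx
        rw [mem_spClass] at ha hb
        exact D.inv_comm D.p_ne_two hax hbx ha.1.1 hb.1.1 (cent_comm (h s hs) ha.2 hb.2)
      obtain ⟨r, hr2, hrc⟩ := mem_of_norm (h1 s hs) h2 hsp hfix
      have e1 : spClass X r = spClass X s := spClass_eq h hs hr2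
      have e2 : spClass X (e : G) = spClass X t := spClass_eq h ht hr
      have e3 : spClass X r = spClass X (e : G) :=
        spClass_eq h hsp (mem_spClass.mpr ⟨(mem_spClass.mp hr2).1, hrc⟩)
      exact hne' (e1.symm.trans (e3.trans e2))
    have hsub : (spClass X t) ∪ ((univ.filter fun e : E => e ∈ T).image (fun e : E => (e : G)))
        ⊆ univ.filter fun g : G => g * t = t * g := by
      intro r hr
      simp only [mem_filter, mem_univ, true_and]
      rcases mem_union.mp hr with h | h
      · exact (mem_spClass.mp h).2
      · obtain ⟨e, -, rfl⟩ := mem_image.mp h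
        exact hmem.mp e.2
    have h3 := card_le_card hsub
    rw [card_union_of_disjoint hdisj, D.dih_cent_card hd ht, hN, hu t ht,
      card_image_of_injective _ Subtype.val_injective] at h3
    have h4 : Nat.card T = (univ.filter fun e : E => e ∈ T).card := by
      rw [Nat.card_eq_fintype_card, Fintype.card_subtype]
    rw [← hn, hE, h4]
    omega

end FlagDesign
end Triple

/-! ### The contradiction for `3m = 2p - 1` and the parameters of the design -/

section Param
open Classical Finset MulAction
set_option linter.unusedSectionVars false

variable {G X Y : Type*} [Group G] [Fintype G] [Fintype X] [Fintype Y] [MulAction G X]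
  [MulAction G Y] {I : X → Y → Prop} {v k l p : ℕ}

/-- The arithmetic of the case `2p = 3m + 1`, with `N` the number of fixed points of a special
involution, `v = N u`, `m = N + d` and `c + 1` the size of a commuting class. -/
lemma triple_arith {p m N u c : ℕ} (hm : 2 * p = 3 * m + 1) (hN1 : N + 1 ≤ m)
    (hv : 1 + p * m = N * u) (hu : u + N ≤ m + 2 + c) (hc : c + 2 ≤ 2 * N) :
    ∃ d e : ℕ, m = N + d ∧ 1 ≤ d ∧ 1 ≤ e ∧ 2 * u = 3 * N + 6 * d + 1 + e ∧
      N * e = 3 * d * d + d + 2 ∧ 4 * d + 1 + e ≤ N ∧ 3 * N + 4 * d + 1 + e ≤ 2 * (c + 2) := by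
  obtain ⟨d, rfl⟩ : ∃ d, m = N + d := ⟨m - N, by omega⟩
  have hN0 : 0 < N := by omega
  have key : (N : ℤ) * (2 * u - 3 * N - 6 * d - 1) = 3 * d * d + d + 2 := by
    have h1 : (2 * p : ℤ) = 3 * (N + d) + 1 := by exact_mod_cast hm
    have h2 : (1 + p * (N + d) : ℤ) = N * u := by exact_mod_cast hv
    linear_combination (-2) * h2 + (N + d) * h1
  have hpos : (0 : ℤ) < 2 * u - 3 * N - 6 * d - 1 := by
    by_contra hneg
    push Not at hneg
    have : (N : ℤ) * (2 * u - 3 * N - 6 * d - 1) ≤ 0 :=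
      mul_nonpos_of_nonneg_of_nonpos (by positivity) hneg
    have : (0 : ℤ) < 3 * d * d + d + 2 := by positivity
    omega
  obtain ⟨e, he⟩ := Int.eq_ofNat_of_zero_le hpos.le
  refine ⟨d, e, rfl, by omega, by omega, by omega, ?_, by omega, by omega⟩
  rw [he] at key
  exact_mod_cast key

namespace FlagDesign

/-- A commuting class whose members fix `N` points each, with `u N = v`, covers the points: the
fixed point sets of two of its members are disjoint. -/
lemma class_meets (D : FlagDesign G I v k l p)
    (h : ∀ t : G, Sp X t → ∀ a : G, a * t = t * a → a * a = 1) {t : G} (ht : Sp X t)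
    (hv : (spClass X t).card * (fixSet X t).card = v) (x : X) : ∃ r ∈ spClass X t, r • x = x := by
  have h1 : ((spClass X t).biUnion fun r => fixSet X r).card = v := by
    rw [card_biUnion, sum_congr rfl (g := fun _ => (fixSet X t).card), sum_const, smul_eq_mul, hv]
    · intro r hr
      exact D.fix_const D.p_ne_two (mem_spClass.mp hr).1 ht
    · intro r hr s hs hne
      rw [Function.onFun, disjoint_left]
      intro y hy hy'
      rw [mem_fixSet] at hy hy'
      rw [mem_coe, mem_spClass] at hr hs
      exact hne (D.inv_comm D.p_ne_two hy hy' hr.1.1 hs.1.1 (cent_comm (h t ht) hr.2 hs.2))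
  have h2 : ((spClass X t).biUnion fun r => fixSet X r) = univ := by
    rw [← card_eq_iff_eq_univ, h1, D.cardX]
  have h3 := mem_univ x
  rw [← h2, mem_biUnion] at h3
  simpa using h3

/-- With `N` fixed points for each special involution, `d = m - N` and classes of `c + 1` elements,
the number `p` of classes satisfies `p ≡ 1 (mod 8)`, and `2N` is a power of two. The arithmetic
forces `16 ∣ N`, so `2p = 3 (N + d) + 1` gives `d ≡ 11 (mod 16)`; then `N ∣ 3d² + d + 2`, which is
`8` modulo `16`. -/
lemma not_triple (D : FlagDesign G I v k l p) (hd : DihStab X G p) (hk : k = 2 * p) {m : ℕ}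
    (hv : v = 1 + p * m) (hm : 3 * m = 2 * p - 1) : False := by
  obtain ⟨t, ht⟩ := D.exists_sp
  have hp := D.prime
  have hp0 := hp.pos
  have hNp := fix_pos ht
  set N := (fixSet X t).card with hN
  set c := (commSp X t).card with hc
  have hm2 : 2 * p = 3 * m + 1 := by omega
  have hNm : N + 1 ≤ m := by
    have h := D.dih_bound_2p hd hk ht
    rw [← hN] at h
    obtain ⟨n, hn⟩ : ∃ n, N = n + 1 := ⟨N - 1, by omega⟩
    rw [hn, Nat.add_sub_cancel, hv] at h
    have h2 : p * (n + 2) ≤ p * m := by linarith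
    have := Nat.le_of_mul_le_mul_left h2 hp0
    omega
  have hIN := D.sp_count D.p_ne_two ht (D.dih_card hd)
  rw [← hN] at hIN
  have hcop : N.Coprime p := (Nat.coprime_of_lt_prime (by omega) (by omega) hp).symm
  obtain ⟨u, hu⟩ : N ∣ v := hcop.dvd_of_dvd_mul_right (Dvd.intro_left _ hIN)
  have hI : (univ.filter fun s : G => Sp X s).card = p * u := by
    apply Nat.eq_of_mul_eq_mul_right hNp
    rw [hIN, hu]; ring
  have hstar : u + N ≤ m + 2 + c := by
    have h := D.dih_star hd ht
    rw [← hN, ← hc, hI, hv, Nat.add_sub_cancel_left] at h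
    refine Nat.le_of_mul_le_mul_left ?_ hp0
    linarith
  have hc2 : c + 2 ≤ 2 * N := D.dih_comm_card hd ht
  obtain ⟨d, e, rfl, hd1, he1, hue, hNe, hN4, hc3⟩ :=
    triple_arith hm2 hNm (by rw [← hv, hu]) hstar hc2
  have hconst : ∀ s : G, Sp X s → (fixSet X s).card = N ∧ (commSp X s).card = c := by
    intro s hs
    refine ⟨D.fix_const D.p_ne_two hs ht, ?_⟩
    obtain ⟨g, rfl⟩ := D.sp_conj D.p_ne_two ht hs
    exact commSp_conj t g
  have hsq : ∀ s : G, Sp X s → ∀ a : G, a * s = s * a → a * a = 1 := by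
    intro s hs a ha
    obtain ⟨h1, h2⟩ := hconst s hs
    exact D.cent_sq hd hs (by rw [h1, h2]; omega) ha
  have hcl : ∀ s : G, Sp X s → (spClass X s).card = c + 1 := by
    intro s hs
    rw [card_spClass hs, (hconst s hs).2]
  obtain ⟨n, hn⟩ := D.cent_two_pow hd hsq ht
  rw [← hN] at hn
  have h12 : N ≠ 6 := by
    intro h6
    rw [h6] at hn
    have : (3 : ℕ) ∣ 2 ^ n := ⟨4, by omega⟩
    have := Nat.prime_three.dvd_of_dvd_pow this
    omega
  have hdpos : ¬ (d = 1) := by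
    rintro rfl
    have : N ≤ 6 := by
      calc N ≤ N * e := Nat.le_mul_of_pos_right _ he1
        _ = 6 := by rw [hNe]
    omega
  have hcc := card_classes hsq hcl
  rw [hI] at hcc
  have hcu : u = c + 1 := by
    have hcp : (c + 1).Coprime p := by
      rw [Nat.coprime_comm, Nat.Prime.coprime_iff_not_dvd hp]
      rintro ⟨b, hb⟩
      have : b < 2 := by
        by_contra hb2
        have := Nat.mul_le_mul_left p (show 2 ≤ b by omega)
        omega
      interval_cases b <;> omega
    obtain ⟨b, hb⟩ : c + 1 ∣ u := hcp.dvd_of_dvd_mul_left (Dvd.intro_left _ hcc.symm)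
    have : b < 2 := by
      by_contra hb2
      have := Nat.mul_le_mul_left (c + 1) (show 2 ≤ b by omega)
      omega
    interval_cases b <;> omega
  have hp' : (classes X G).card = p := by
    rw [← hcu] at hcc
    exact (Nat.eq_of_mul_eq_mul_right (by omega) hcc).symm
  have h8 := D.eight_dvd_classes hd hsq hcl
    (fun s hs => D.class_meets hsq hs (by rw [hcl s hs, (hconst s hs).1, hu, hcu]; ring)) ht hN.symm
    (by omega)
  rw [hp'] at h8
  have hv2 : 2 ∣ v := by
    have h1 : ¬ 2 ∣ p := fun h => D.p_ne_two ((Nat.prime_dvd_prime_iff_eq Nat.prime_two hp).mp h).symm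
    have h2 : Odd (p * (N + d)) :=
      (Nat.odd_iff.mpr (by omega)).mul (Nat.odd_iff.mpr (by omega))
    rw [hv]
    exact (odd_one.add_odd h2).two_dvd
  have hNe2 := D.fix_even hv2 ht
  rw [← hN] at hNe2
  have hN16 : 16 ∣ N := by
    have h5 : 5 ≤ n := by
      by_contra h
      have : 2 ^ n ≤ 2 ^ 4 := Nat.pow_le_pow_right (by norm_num) (by omega)
      omega
    have : 2 ^ 5 ∣ 2 ^ n := pow_dvd_pow 2 h5
    omega
  have h11 : d % 16 = 11 := by omega
  have h16 : 16 ∣ 3 * d * d + d + 2 := hNe ▸ Dvd.dvd.mul_right hN16 e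
  have : (3 * d * d + d + 2) % 16 = 8 := by
    simp [Nat.add_mod, Nat.mul_mod, h11]
  omega

lemma main_param (D : FlagDesign G I v k l p) : v = 16 ∧ k = 6 ∧ l = 2 ∧ p = 3 := by
  by_cases hd : DihStab X G p
  · rcases D.k_cases with hk | hk
    · exact (D.not_dih_p hd hk).elim
    · rcases D.dih_2p hd hk with h | ⟨m, hv, hm⟩
      · exact h
      · exact (D.not_triple hd hk hv hm).elim
  · rcases D.k_cases with hk | hk
    · exact (D.not_cyc_p hd hk).elim
    · exact D.cyc_2p hd hk

end FlagDesign
end Param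

/-! ### Groups of order six -/

section Six
open Classical Finset MulAction
set_option linter.unusedSectionVars false

variable {A : Type*} [Group A] [Finite A]

lemma cyclic_six (hA : Nat.card A = 2 * 3) (h : ¬ DihType A 3) :
    Nonempty (A ≃* Multiplicative (ZMod 6)) := by
  unfold DihType at h
  push Not at h
  obtain ⟨g, t, hg, h1, ht, hc⟩ := h
  have og : orderOf g = 3 := orderOf_eq_p Nat.prime_three h1 hg
  have ot : orderOf t = 2 := orderOf_eq_p Nat.prime_two (by rw [pow_two, ht.2]) ht.1
  have ho : orderOf (t * g) = Nat.card A := by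
    rw [Commute.orderOf_mul_eq_mul_orderOf_of_coprime hc (by rw [og, ot]; norm_num), og, ot, hA]
  have : IsCyclic A := isCyclic_of_orderOf_eq_card _ ho
  exact ⟨mulEquivOfCyclicCardEq (by rw [hA]; simp)⟩

lemma dihedral_six (hA : Nat.card A = 2 * 3) (h : DihType A 3) :
    Nonempty (A ≃* DihedralGroup 3) := by
  obtain ⟨g, h1, hg⟩ := exists_order_p Nat.prime_three hA
  obtain ⟨t, ht⟩ := exists_isInv hA
  have hinv : ∀ n : ℕ, g ^ n * t = t * (g ^ n)⁻¹ := by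
    intro n
    have hn : t * g ^ n ∉ Subgroup.zpowers g := by
      intro hm
      have := mul_mem hm (inv_mem (pow_mem (Subgroup.mem_zpowers g) n))
      rw [mul_inv_cancel_right] at this
      exact ht.not_mem_zpowers Nat.prime_three (by norm_num) h1 this
    have h2 := (h.isInv Nat.prime_three (by norm_num) hA hg h1 hn).inv_eq
    rw [mul_inv_rev, ht.inv_eq] at h2
    have h3 := congrArg (fun a => g ^ n * a * (g ^ n)⁻¹) h2
    have h4 : g ^ n * ((g ^ n)⁻¹ * t) * (g ^ n)⁻¹ = t * (g ^ n)⁻¹ := by group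
    have h5 : g ^ n * (t * g ^ n) * (g ^ n)⁻¹ = g ^ n * t := by group
    simp only [h4, h5] at h3
    exact h3.symm
  have hadd : ∀ i j : ZMod 3, g ^ (i + j).val = g ^ i.val * g ^ j.val := by
    intro i j
    rw [ZMod.val_add, ← pow_add]
    conv_rhs => rw [← Nat.mod_add_div (i.val + j.val) 3, pow_add, pow_mul, h1, one_pow, mul_one]
  have hsub : ∀ i j : ZMod 3, g ^ (j - i).val = (g ^ i.val)⁻¹ * g ^ j.val := by
    intro i j
    rw [eq_inv_mul_iff_mul_eq, ← hadd, add_sub_cancel]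
  have hcomm : ∀ m n : ℕ, g ^ m * (g ^ n)⁻¹ = (g ^ n)⁻¹ * g ^ m := fun m n =>
    ((Commute.pow_pow_self g m n).inv_right).eq
  let f : DihedralGroup 3 →* A := MonoidHom.mk'
    (fun x => match x with
      | .r i => g ^ i.val
      | .sr i => t * g ^ i.val) (by
    rintro (i | i) (j | j)
    · exact hadd i j
    · change t * g ^ (j - i).val = g ^ i.val * (t * g ^ j.val)
      rw [hsub, ← mul_assoc, ← mul_assoc, hinv]
    · change t * g ^ (i + j).val = t * g ^ i.val * g ^ j.val
      rw [hadd, mul_assoc]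
    · change g ^ (j - i).val = t * g ^ i.val * (t * g ^ j.val)
      rw [hsub, mul_assoc t, ← mul_assoc (g ^ i.val), hinv, mul_assoc, ← mul_assoc t, ht.2, one_mul])
  have hf : Function.Injective f := by
    rw [injective_iff_map_eq_one]
    rintro (i | i) hi
    · change g ^ i.val = 1 at hi
      have h2 := orderOf_dvd_of_pow_eq_one hi
      rw [orderOf_eq_p Nat.prime_three h1 hg] at h2
      have h3 := Nat.eq_zero_of_dvd_of_lt h2 i.val_lt
      rw [(ZMod.val_eq_zero i).mp h3]; rfl
    · change t * g ^ i.val = 1 at hi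
      exfalso
      refine ht.not_mem_zpowers Nat.prime_three (by norm_num) h1 ?_
      rw [eq_inv_of_mul_eq_one_left hi]
      exact inv_mem (pow_mem (Subgroup.mem_zpowers g) _)
  have hb : Function.Bijective f := by
    rw [Nat.bijective_iff_injective_and_card]
    exact ⟨hf, by rw [hA, DihedralGroup.nat_card]⟩
  exact ⟨(MulEquiv.ofBijective f hb).symm⟩

end Six

/-! ### Imprimitivity of groups of order `96` and degree `16` -/

section Imprimitive
open Classical Finset MulAction Subgroup
set_option linter.unusedSectionVars false

variable {G X : Type*} [Group G] [Fintype G] [Fintype X] [MulAction G X]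

lemma normal_trans (hprim : IsPrimitiveAction G X) (hf : ∀ g : G, (∀ x : X, g • x = x) → g = 1)
    {N : Subgroup G} [N.Normal] (hN : N ≠ ⊥) (x y : X) : ∃ n ∈ N, n • x = y := by
  obtain ⟨htr, hbl⟩ := hprim
  rcases hbl _ (IsBlock.orbit_of_normal (N := N) x) with h | h
  · exfalso
    have h1 : ∀ n ∈ N, n • x = x := fun n hn =>
      h (mem_orbit x (⟨n, hn⟩ : N)) (mem_orbit_self x)
    apply hN
    rw [eq_bot_iff]
    intro n hn
    rw [mem_bot]
    apply hf
    intro z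
    obtain ⟨g, rfl⟩ := exists_smul_eq G x z
    have h2 := h1 (g⁻¹ * n * g) (by simpa using (‹N.Normal›.conj_mem n hn g⁻¹))
    rw [mul_smul, mul_smul, inv_smul_eq_iff] at h2
    exact h2
  · have hy : y ∈ orbit N x := h ▸ Set.mem_univ y
    obtain ⟨n, hn⟩ := hy
    exact ⟨n, n.2, hn⟩

/-- The core of a Sylow `2`-subgroup is not trivial: the subgroup has index `3`, and `96 ∤ 3!`. -/
lemma exists_two_core (hG : Nat.card G = 96) :
    ∃ K : Subgroup G, K.Normal ∧ IsPGroup 2 K ∧ K ≠ ⊥ := by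
  have : Fact (Nat.Prime 2) := ⟨Nat.prime_two⟩
  obtain ⟨S, hS⟩ := Sylow.exists_subgroup_card_pow_prime (G := G) 2 (n := 5) (by rw [hG]; norm_num)
  have hi : S.index = 3 := by
    have := S.card_mul_index
    rw [hS, hG] at this
    omega
  refine ⟨S.normalCore, inferInstance, (IsPGroup.of_card hS).to_le S.normalCore_le, fun hb => ?_⟩
  have h : S.normalCore.index ∣ S.index.factorial := by
    rw [normalCore_eq_ker, index_ker, index_eq_card, ← Nat.card_perm]
    exact card_subgroup_dvd_card (toPermHom G (G ⧸ S)).range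
  rw [hb, index_bot, hG, hi] at h
  exact absurd h (by decide)

/-- The elements with `a² = 1` in the center of a normal `2`-subgroup form an elementary abelian
normal subgroup. -/
lemma exists_elementary (hG : Nat.card G = 96) :
    ∃ A : Subgroup G, A.Normal ∧ A ≠ ⊥ ∧ (∀ a ∈ A, ∀ b ∈ A, a * b = b * a) ∧
      ∀ a ∈ A, a * a = 1 := by
  have : Fact (Nat.Prime 2) := ⟨Nat.prime_two⟩
  obtain ⟨K, hK, h2, hb⟩ := exists_two_core hG
  let A : Subgroup G :=
    { carrier := {a | a ∈ K ∧ (∀ b ∈ K, a * b = b * a) ∧ a * a = 1}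
      one_mem' := ⟨one_mem _, by simp, by simp⟩
      mul_mem' := by
        rintro a b ⟨ha, hac, ha2⟩ ⟨hb, hbc, hb2⟩
        refine ⟨mul_mem ha hb, fun c hc => ?_, ?_⟩
        · rw [mul_assoc, hbc c hc, ← mul_assoc, hac c hc, mul_assoc]
        · rw [mul_assoc, ← mul_assoc b, ← hac b hb, mul_assoc a b b, hb2, mul_one, ha2]
      inv_mem' := by
        rintro a ⟨ha, hac, ha2⟩
        rw [inv_eq_of_mul_eq_one_left ha2]
        exact ⟨ha, hac, ha2⟩ }
  have hA : ∀ a, a ∈ A ↔ a ∈ K ∧ (∀ b ∈ K, a * b = b * a) ∧ a * a = 1 := fun a => Iff.rfl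
  refine ⟨A, ⟨?_⟩, ?_, fun a ha b hb => ((hA a).mp ha).2.1 b ((hA b).mp hb).1,
    fun a ha => ((hA a).mp ha).2.2⟩
  · intro a ha g
    rw [hA] at ha ⊢
    obtain ⟨ha, hac, ha2⟩ := ha
    refine ⟨hK.conj_mem a ha g, fun b hb => ?_, ?_⟩
    · have h := hac _ (show g⁻¹ * b * g ∈ K by simpa using hK.conj_mem b hb g⁻¹)
      calc g * a * g⁻¹ * b = g * (a * (g⁻¹ * b * g)) * g⁻¹ := by group
        _ = _ := by rw [h]; group
    · calc g * a * g⁻¹ * (g * a * g⁻¹) = g * (a * a) * g⁻¹ := by group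
        _ = 1 := by rw [ha2]; group
  · have : Nontrivial K := (Subgroup.nontrivial_iff_ne_bot K).mpr hb
    have hn := h2.center_nontrivial
    have h3 : 2 ∣ Nat.card (center K) := by
      obtain ⟨n, hn0, hn'⟩ := (IsPGroup.nontrivial_iff_card (h2.to_subgroup (center K))).mp hn
      rw [hn']
      exact dvd_pow_self 2 hn0.ne'
    obtain ⟨z, hz⟩ := exists_prime_orderOf_dvd_card' 2 h3
    intro hbot
    have hzA : ((z : K) : G) ∈ A := by
      rw [hA]
      refine ⟨z.1.2, fun b hb => ?_, ?_⟩
      · have := mem_center_iff.mp z.2 ⟨b, hb⟩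
        exact (congrArg Subtype.val this).symm
      · have := pow_orderOf_eq_one z
        rw [hz, pow_two] at this
        exact congrArg (fun a : center K => ((a : K) : G)) this
    rw [hbot, mem_bot] at hzA
    have : z = 1 := Subtype.ext (Subtype.ext hzA)
    rw [this, orderOf_one] at hz
    omega

/-- In a primitive group, an elementary abelian normal subgroup `A ≠ 1` would be regular of order
`16`. An involution of a point stabilizer centralizes some `z ≠ 1` in `A`, so `z` has at most three
conjugates, and these generate a normal subgroup of order at most `8`, which is intransitive. -/
lemma not_primitive (hX : Fintype.card X = 16)
    (hs : ∀ x : X, Nat.card (stabilizer G x) = 2 * 3)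
    (hf : ∀ g : G, (∀ x : X, g • x = x) → g = 1) : ¬ IsPrimitiveAction G X := by
  intro hprim
  have htr := hprim.1
  obtain ⟨x⟩ : Nonempty X := Fintype.card_pos_iff.mp (by omega)
  have hG : Nat.card G = 96 := by
    have h := card_orbit_mul_card_stabilizer_eq_card_group G x
    rw [← Nat.card_eq_fintype_card, ← Nat.card_eq_fintype_card, ← Nat.card_eq_fintype_card, hs,
      orbit_eq_univ, Nat.card_univ, Nat.card_eq_fintype_card, hX] at h
    omega
  have hGf : Fintype.card G = 96 := by rw [← Nat.card_eq_fintype_card, hG]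
  obtain ⟨A, hAn, hAb, hAc, hA2⟩ := exists_elementary hG
  have hreg : ∀ a ∈ A, ∀ b ∈ A, a • x = b • x → a = b := by
    intro a ha b hb hab
    rw [eq_comm, ← inv_mul_eq_one]
    apply hf
    intro y
    obtain ⟨c, hc, rfl⟩ := normal_trans hprim hf hAb x y
    have h1 : (b⁻¹ * a) • x = x := by rw [mul_smul, hab, inv_smul_smul]
    rw [← mul_smul, hAc _ (mul_mem (inv_mem hb) ha) _ hc, mul_smul, h1]
  have hAcard : 16 ≤ (univ.filter fun a : G => a ∈ A).card := by
    have h1 : (univ.filter fun a : G => a ∈ A).image (fun a => a • x) = univ := by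
      rw [eq_univ_iff_forall]
      intro y
      obtain ⟨c, hc, rfl⟩ := normal_trans hprim hf hAb x y
      exact mem_image_of_mem _ (by simpa using hc)
    rw [← hX, ← card_univ, ← h1]
    exact card_image_le
  obtain ⟨⟨t, htx⟩, ht'⟩ := exists_isInv (hs x)
  have ht : IsInv t := ht'.coe
  rw [mem_stabilizer_iff] at htx
  -- the involution `t` fixes an even number of the `16` points, hence a second point `z • x`
  obtain ⟨y, hy, hyx⟩ : ∃ y ∈ univ.filter (fun y : X => t • y = y), y ≠ x := by
    apply exists_mem_ne
    have h1 := card_fix_modEq Nat.prime_two (g := t) (by rw [pow_two, ht.2]) (univ : Finset X)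
      (fun _ _ => mem_univ _)
    rw [card_univ, hX] at h1
    have h2 : 0 < (univ.filter fun y : X => t • y = y).card := card_pos.mpr ⟨x, by simpa using htx⟩
    have h3 : 16 % 2 = (univ.filter fun y : X => t • y = y).card % 2 := h1
    omega
  obtain ⟨z, hz, rfl⟩ := normal_trans hprim hf hAb x y
  have hty : t • z • x = z • x := by simpa using hy
  have hz1 : z ≠ 1 := by
    rintro rfl
    exact hyx (one_smul _ x)
  have htz : t * z * t⁻¹ = z := by
    refine hreg _ (hAn.conj_mem z hz t) _ hz ?_
    rw [mul_smul, inv_smul_eq_iff.mpr htx.symm, mul_smul, hty]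
  have htA : t ∉ A := fun h => ht.1 (hreg t h 1 (one_mem _) (by rw [htx, one_smul]))
  set S : Finset G := univ.image fun g : G => g * z * g⁻¹ with hS
  have hS3 : S.card ≤ 3 := by
    have h1 := mul_card_image_le_card (f := fun g : G => g * z * g⁻¹) univ 32 ?_
    · rw [← hS, card_univ, hGf] at h1
      omega
    intro b hb
    obtain ⟨g, -, rfl⟩ := mem_image.mp hb
    have hdisj : Disjoint (univ.filter fun a : G => a ∈ A)
        ((univ.filter fun a : G => a ∈ A).image fun a => a * t) := by
      rw [disjoint_left]
      intro a ha ha'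
      simp only [mem_image, mem_filter, mem_univ, true_and] at ha ha'
      obtain ⟨c, hc, rfl⟩ := ha'
      exact htA ((mul_mem_cancel_left hc).mp ha)
    -- the centralizer of `z` contains `A` and `A t`, hence at least `32` elements
    have hsub : ((univ.filter fun a : G => a ∈ A) ∪
        (univ.filter fun a : G => a ∈ A).image fun a => a * t).image (fun a => g * a)
        ⊆ univ.filter fun a : G => a * z * a⁻¹ = g * z * g⁻¹ := by
      intro a ha
      obtain ⟨c, hc, rfl⟩ := mem_image.mp ha
      simp only [mem_union, mem_image, mem_filter, mem_univ, true_and] at hc ⊢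
      have hcz : c * z * c⁻¹ = z := by
        rcases hc with hc | ⟨c, hc, rfl⟩
        · rw [hAc c hc z hz, mul_inv_cancel_right]
        · calc c * t * z * (c * t)⁻¹ = c * (t * z * t⁻¹) * c⁻¹ := by group
            _ = z := by rw [htz, hAc c hc z hz, mul_inv_cancel_right]
      calc g * c * z * (g * c)⁻¹ = g * (c * z * c⁻¹) * g⁻¹ := by group
        _ = _ := by rw [hcz]
    have h2 := card_le_card hsub
    rw [card_image_of_injective _ (mul_right_injective g), card_union_of_disjoint hdisj,
      card_image_of_injective _ (mul_left_injective t)] at h2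
    omega
  have hN : normalClosure {z} = closure (S : Set G) := by
    rw [normalClosure]
    congr 1
    ext b
    simp [Group.mem_conjugatesOfSet_iff, isConj_iff, hS]
  have hle : closure (S : Set G) ≤ A := by
    rw [← hN]
    exact normalClosure_le_normal (by simpa using hz)
  have hcard : Nat.card (closure (S : Set G)) ∣ 2 ^ 3 := by
    let _ : CommGroup (closure (S : Set G)) :=
      { (closure (S : Set G)).toGroup with
        mul_comm := fun a b => Subtype.ext (hAc _ (hle a.2) _ (hle b.2)) }
    have h1 := card_dvd_exponent_pow_rank' (closure (S : Set G)) (n := 2)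
      (fun a => Subtype.ext (by
        change ((a ^ 2 : closure (S : Set G)) : G) = 1
        rw [pow_two]
        exact hA2 _ (hle a.2)))
    exact h1.trans (pow_dvd_pow 2 ((rank_closure_finset_le_card S).trans hS3))
  have hzN : z ∈ closure (S : Set G) := by
    rw [← hN]
    exact subset_normalClosure rfl
  have hNn : (closure (S : Set G)).Normal := hN ▸ normalClosure_normal
  have hNb : closure (S : Set G) ≠ ⊥ := fun h => hz1 (by rwa [h, mem_bot] at hzN)
  have h16 : 16 ≤ Nat.card (closure (S : Set G)) := by
    rw [Nat.card_eq_fintype_card, ← hX]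
    apply Fintype.card_le_of_surjective (fun n : closure (S : Set G) => (n : G) • x)
    intro y
    obtain ⟨n, hn, rfl⟩ := normal_trans hprim hf hNb x y
    exact ⟨⟨n, hn⟩, rfl⟩
  have := Nat.le_of_dvd (by norm_num) hcard
  omega

end Imprimitive

/-! ### The design of the theorem -/

section Instance
open MulAction
set_option linter.unusedSectionVars false

variable {𝓑 : Finset (Finset P)} {v k lam p : ℕ} {G : Subgroup (Equiv.Perm P)}

/-- The action on the block set of a group of automorphisms. -/
abbrev blockAction (hAut : IsAutGroup G 𝓑) : MulAction G 𝓑 where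
  smul g C := ⟨(g : Equiv.Perm P) • (C : Finset P), hAut g g.2 C C.2⟩
  one_smul C := Subtype.ext (one_smul (Equiv.Perm P) (C : Finset P))
  mul_smul g h C := Subtype.ext (mul_smul (g : Equiv.Perm P) (h : Equiv.Perm P) (C : Finset P))

lemma flagDesign [Fintype G] (hD : IsDesign 𝓑 v k lam) (hsym : 𝓑.card = v)
    (hAut : IsAutGroup G 𝓑) (hflag : IsFlagTransitive G 𝓑) (hp : p.Prime)
    (hstab : ∀ x : P, Nat.card (stabilizer G x) = 2 * p) :
    letI := blockAction hAut
    FlagDesign G (fun (x : P) (B : 𝓑) => x ∈ (B : Finset P)) v k lam p := by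
  classical
  let _ := blockAction hAut
  have hS : SymDesign (fun (x : P) (B : 𝓑) => x ∈ (B : Finset P)) v k lam := by
    refine SymDesign.of_pair hD.card_points (by rw [Fintype.card_coe, hsym]) ?_ ?_ hD.two_lt_k
      (by have := hD.k_lt_v; omega) hD.lam_pos
    · intro B
      rw [← hD.blocks_card B B.2]
      congr 1
      ext x
      simp
    · intro x y hxy
      rw [← hD.pair_blocks x y hxy]
      refine Finset.card_bij (fun B _ => (B : Finset P)) ?_ ?_ ?_
      · intro B hB
        simpa using hB
      · intro B _ C _ h
        exact Subtype.ext h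
      · intro B hB
        simp only [Finset.mem_filter] at hB
        exact ⟨⟨B, hB.1⟩, by simpa using hB.2, rfl⟩
  refine { hS with prime := hp, inv := ?_, flag := ?_, stab := hstab, faithful := ?_ }
  · intro g x B
    change (g : Equiv.Perm P) • x ∈ (g : Equiv.Perm P) • (B : Finset P) ↔ _
    exact Finset.smul_mem_smul_finset_iff _
  · intro x B y C hx hy
    obtain ⟨g, hg, h1, h2⟩ := hflag B B.2 C C.2 x hx y hy
    exact ⟨⟨g, hg⟩, h1, Subtype.ext h2⟩
  · intro g hg
    exact Subtype.ext (Equiv.ext hg)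

end Instance

/-- **Corollary 8.1.** Let `G` be a flag-transitive automorphism group of a symmetric
design whose point stabilizers have order `2p`, `p` prime. Then the design is the unique
2-(16,6,2) design, `p = 3`, `G` is imprimitive on points and on blocks, and
`G_x ≅ G_B` is isomorphic to `D₆` or to `Z₆`. -/
theorem stmt_19 (𝓑 : Finset (Finset P)) (v k lam : ℕ)
    (hD : IsDesign 𝓑 v k lam) (hsym : 𝓑.card = v)
    (G : Subgroup (Equiv.Perm P)) (hAut : IsAutGroup G 𝓑)
    (hflag : IsFlagTransitive G 𝓑)
    (p : ℕ) (hp : p.Prime)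
    (hstab : ∀ x : P, Nat.card (MulAction.stabilizer G x) = 2 * p) :
    v = 16 ∧ k = 6 ∧ lam = 2 ∧ p = 3 ∧
    (MulAction.IsPretransitive G P ∧ ¬ IsPrimitiveAction G P) ∧
    (∃ ψ : G →* Equiv.Perm 𝓑,
      (∀ (g : G) (C : 𝓑), (ψ g C : Finset P) = g • (C : Finset P)) ∧
      MulAction.IsPretransitive ψ.range 𝓑 ∧ ¬ IsPrimitiveAction ψ.range 𝓑) ∧
    (∀ x : P, ∀ B ∈ 𝓑,
      Nonempty (MulAction.stabilizer G x ≃* MulAction.stabilizer G B) ∧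
      (Nonempty (MulAction.stabilizer G x ≃* DihedralGroup 3) ∨
        Nonempty (MulAction.stabilizer G x ≃* Multiplicative (ZMod 6)))) := by
  classical
  let _ : Fintype G := Fintype.ofFinite G
  let _ : MulAction G 𝓑 := blockAction hAut
  have D := flagDesign hD hsym hAut hflag hp hstab
  obtain ⟨rfl, rfl, rfl, rfl⟩ := D.main_param
  refine ⟨rfl, rfl, rfl, rfl, ⟨⟨D.trans⟩, not_primitive D.cardX hstab D.faithful⟩, ?_, ?_⟩
  · have hinj : Function.Injective (MulAction.toPermHom G 𝓑) := by
      rw [injective_iff_map_eq_one]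
      intro g hg
      apply D.faithful
      intro x
      obtain ⟨B, hB⟩ := D.beta_pt D.p_ne_two D.ndvd x
      exact (hB g).mpr (congrArg (fun σ : Equiv.Perm 𝓑 => σ B) hg)
    refine ⟨MulAction.toPermHom G 𝓑, fun _ _ => rfl, ⟨fun B C => ?_⟩, ?_⟩
    · obtain ⟨g, hg⟩ := D.transB B C
      exact ⟨⟨_, g, rfl⟩, hg⟩
    · let _ : Fintype (MulAction.toPermHom G 𝓑).range := Fintype.ofFinite _
      refine not_primitive D.cardY (fun B => ?_) fun σ hσ => Subtype.ext (Equiv.ext hσ)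
      rw [← D.stabB B]
      symm
      refine Nat.card_congr (Equiv.ofBijective
        (fun g : MulAction.stabilizer G B =>
          (⟨⟨MulAction.toPermHom G 𝓑 g, g, rfl⟩, g.2⟩ :
            MulAction.stabilizer (MulAction.toPermHom G 𝓑).range B)) ⟨?_, ?_⟩)
      · intro g h hgh
        exact Subtype.ext (hinj (congrArg (fun s => ((s : (MulAction.toPermHom G 𝓑).range) :
          Equiv.Perm 𝓑)) (congrArg Subtype.val hgh)))
      · rintro ⟨⟨_, g, rfl⟩, hg⟩
        exact ⟨⟨g, hg⟩, rfl⟩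
  · intro x B hB
    refine ⟨?_, ?_⟩
    · obtain ⟨y, hy⟩ := D.beta_blk D.p_ne_two D.ndvd ⟨B, hB⟩
      have h1 : MulAction.stabilizer G y = MulAction.stabilizer G B := by
        ext g
        rw [MulAction.mem_stabilizer_iff, MulAction.mem_stabilizer_iff, hy g, Subtype.ext_iff]
        rfl
      obtain ⟨g, hg⟩ := D.trans y x
      have e := MulAction.stabilizerEquivStabilizer hg.symm
      exact ⟨e.symm.trans (MulEquiv.subgroupCongr h1)⟩
    · by_cases h : DihType (MulAction.stabilizer G x) 3
      · exact Or.inl (dihedral_six (hstab x) h)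
      · exact Or.inr (cyclic_six (hstab x) h)
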